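/- Let n ∈ ℕ, p⃗, q⃗ = (q_1,…,q_n) ∈ (1,∞)^n and α⃗ = (α_1,…,α_n) ∈ ℝⁿ with α_i ∈ (-1/q_i, 1 - 1/q_i) for every i ∈ {1,…,n}. Then there exists a positive constant C such that for every measurable f : ℝⁿ → ℂ, ‖M(f)‖_{Ė^{α⃗,p⃗}_{q⃗}(ℝⁿ)} ≤ C ‖f‖_{Ė^{α⃗,p⃗}_{q⃗}(ℝⁿ)}, where M is the centered Hardy–Littlewood maximal operator. -/

import Mathlib

open MeasureTheory ENNReal Filter

noncomputable section

/-- The dyadic annulus `R_k = (-2^k, 2^k) \ (-2^(k-1), 2^(k-1))` in `ℝ`. -/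
def herzRing (k : ℤ) : Set ℝ :=
  Set.Ioo (-(2 : ℝ) ^ k) ((2 : ℝ) ^ k) \ Set.Ioo (-(2 : ℝ) ^ (k - 1)) ((2 : ℝ) ^ (k - 1))

/-- The `L^q` "norm" (valued in `ℝ≥0∞`) of an `ℝ≥0∞`-valued function on a set `s ⊆ ℝ`,
with the usual modification when `q = ∞`. -/
def lqNormOn (q : ℝ≥0∞) (s : Set ℝ) (g : ℝ → ℝ≥0∞) : ℝ≥0∞ :=
  if q = ∞ then essSup (s.indicator g) volume
  else (∫⁻ x in s, g x ^ q.toReal) ^ (1 / q.toReal)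

/-- The `l^p` norm over `ℤ` of an `ℝ≥0∞`-valued sequence, with the usual modification
when `p = ∞`. -/
def lpZNorm (p : ℝ≥0∞) (a : ℤ → ℝ≥0∞) : ℝ≥0∞ :=
  if p = ∞ then ⨆ k, a k
  else (∑' k : ℤ, a k ^ p.toReal) ^ (1 / p.toReal)

/-- The one-dimensional Herz norm `K^{α,p}_q` of an `ℝ≥0∞`-valued function on `ℝ`. -/
def herzNorm1 (α : ℝ) (p q : ℝ≥0∞) (g : ℝ → ℝ≥0∞) : ℝ≥0∞ :=
  lpZNorm p fun k => ENNReal.ofReal ((2 : ℝ) ^ ((k : ℝ) * α)) * lqNormOn q (herzRing k) g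

/-- The mixed-norm Herz norm on `ℝⁿ` of an `ℝ≥0∞`-valued function: the Herz norm
`K^{α_1,p_1}_{q_1}` is applied in the first variable, then `K^{α_2,p_2}_{q_2}` in the
second variable, …, and finally `K^{α_n,p_n}_{q_n}` in the last variable. -/
def mixedHerzNormE : (n : ℕ) → (Fin n → ℝ) → (Fin n → ℝ≥0∞) → (Fin n → ℝ≥0∞) →
    ((Fin n → ℝ) → ℝ≥0∞) → ℝ≥0∞
  | 0, _, _, _, f => f fun i => i.elim0
  | n + 1, α, p, q, f =>
    herzNorm1 (α (Fin.last n)) (p (Fin.last n)) (q (Fin.last n)) fun xlast =>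
      mixedHerzNormE n (Fin.init α) (Fin.init p) (Fin.init q) fun y => f (Fin.snoc y xlast)

/-- The mixed-norm Herz norm `‖f‖_{Ė^{α,p}_q(ℝⁿ)}` of a complex-valued function on `ℝⁿ`. -/
def herzNormC (n : ℕ) (α : Fin n → ℝ) (p q : Fin n → ℝ≥0∞) (f : (Fin n → ℝ) → ℂ) : ℝ≥0∞ :=
  mixedHerzNormE n α p q fun x => (‖f x‖₊ : ℝ≥0∞)

/-- `I_m = (-2^m, -2^{-m}] ∪ [2^{-m}, 2^m)`. -/
def herzI (m : ℕ) : Set ℝ :=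
  Set.Ioc (-(2 : ℝ) ^ (m : ℤ)) (-(2 : ℝ) ^ (-(m : ℤ))) ∪
    Set.Ico ((2 : ℝ) ^ (-(m : ℤ))) ((2 : ℝ) ^ (m : ℤ))

/-- `A_m = I_m^n ⊆ ℝⁿ`. -/
def herzA (n m : ℕ) : Set (Fin n → ℝ) := Set.univ.pi fun _ => herzI m

/-- The class `H(ℝⁿ)` of simple functions built from finitely many pairwise disjoint
parallelepipeds contained in some `A_m`. -/
def IsHSimple (n : ℕ) (f : (Fin n → ℝ) → ℂ) : Prop :=
  ∃ (m N : ℕ) (a : Fin N → ℂ) (E : Fin N → Fin n → Set ℝ),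
    (∀ k i, MeasurableSet (E k i)) ∧
    (∀ k, Set.univ.pi (E k) ⊆ herzA n m) ∧
    (Pairwise fun k l => Disjoint (Set.univ.pi (E k)) (Set.univ.pi (E l))) ∧
    f = fun x => ∑ k, (Set.univ.pi (E k)).indicator (fun _ => a k) x

/-- The Euclidean ball `B(x,r)` in `ℝⁿ`. -/
def eucBall (n : ℕ) (x : Fin n → ℝ) (r : ℝ) : Set (Fin n → ℝ) :=
  {y | ∑ i, (y i - x i) ^ 2 < r ^ 2}

/-- The (uncentered) maximal operator in the `k`-th variable. -/
def maxVar (n : ℕ) (k : Fin n) (g : (Fin n → ℝ) → ℝ≥0∞) : (Fin n → ℝ) → ℝ≥0∞ :=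
  fun x => ⨆ (a : ℝ) (b : ℝ) (_ : x k ∈ Set.Ioo a b),
    (volume (Set.Ioo a b))⁻¹ * ∫⁻ y in Set.Ioo a b, g (Function.update x k y)

/-- The centered Hardy–Littlewood maximal operator on `ℝⁿ`. -/
def centeredMax (n : ℕ) (g : (Fin n → ℝ) → ℝ≥0∞) : (Fin n → ℝ) → ℝ≥0∞ :=
  fun x => ⨆ (r : ℝ) (_ : 0 < r),
    (volume (eucBall n x r))⁻¹ * ∫⁻ y in eucBall n x r, g y

/-- The composition `M_n ∘ ⋯ ∘ M_1` of the maximal operators in each variable. -/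
def iteratedMax (n : ℕ) (g : (Fin n → ℝ) → ℝ≥0∞) : (Fin n → ℝ) → ℝ≥0∞ :=
  (List.ofFn fun k : Fin n => maxVar n k).foldl (fun h F => F h) g

/-- The iterated maximal operator `ℳ_t(f) = [M_n ⋯ M_1(|f|^t)]^{1/t}`. -/
def iterMaxPow (n : ℕ) (t : ℝ) (f : (Fin n → ℝ) → ℂ) : (Fin n → ℝ) → ℝ≥0∞ :=
  fun x => iteratedMax n (fun y => (‖f y‖₊ : ℝ≥0∞) ^ t) x ^ (1 / t)

/-- The `l^r`-Herz type mixed norm of a sequence of functions on `ℝⁿ`. -/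
def herzSeqNorm (n : ℕ) (r : ℝ≥0∞) (α : Fin n → ℝ) (p q : Fin n → ℝ≥0∞)
    (F : ℤ → (Fin n → ℝ) → ℂ) : ℝ≥0∞ :=
  mixedHerzNormE n α p q fun x => lpZNorm r fun j => (‖F j x‖₊ : ℝ≥0∞)

/-- `N` is a ball quasi-Banach function norm on (nonnegative extended-real-valued)
measurable functions on `ℝⁿ`. -/
def IsBQBFNorm (n : ℕ) (N : ((Fin n → ℝ) → ℝ≥0∞) → ℝ≥0∞) : Prop :=
  (∀ f : (Fin n → ℝ) → ℝ≥0∞, Measurable f → N f = 0 → f =ᵐ[volume] 0) ∧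
  (∀ f g : (Fin n → ℝ) → ℝ≥0∞, Measurable f → Measurable g →
    (∀ᵐ x ∂volume, g x ≤ f x) → N g ≤ N f) ∧
  (∀ (fm : ℕ → (Fin n → ℝ) → ℝ≥0∞) (f : (Fin n → ℝ) → ℝ≥0∞),
    (∀ m, Measurable (fm m)) → Measurable f →
    (∀ᵐ x ∂volume, Monotone (fun m => fm m x) ∧
      Tendsto (fun m => fm m x) atTop (nhds (f x))) →
    Monotone (fun m => N (fm m)) ∧ Tendsto (fun m => N (fm m)) atTop (nhds (N f))) ∧
  (∀ (x : Fin n → ℝ) (r : ℝ), 0 < r →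
    N ((eucBall n x r).indicator fun _ => (1 : ℝ≥0∞)) ≠ ∞)

/-- `N` is a ball Banach function norm: a ball quasi-Banach function norm that moreover
satisfies the triangle inequality and locally dominates the `L¹` norm. -/
def IsBallBanachNorm (n : ℕ) (N : ((Fin n → ℝ) → ℝ≥0∞) → ℝ≥0∞) : Prop :=
  IsBQBFNorm n N ∧
  (∀ f g : (Fin n → ℝ) → ℝ≥0∞, Measurable f → Measurable g → N (f + g) ≤ N f + N g) ∧
  (∀ (x : Fin n → ℝ) (r : ℝ), 0 < r → ∃ C : ℝ≥0∞, 0 < C ∧ C ≠ ∞ ∧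
    ∀ f : (Fin n → ℝ) → ℝ≥0∞, Measurable f → (∫⁻ y in eucBall n x r, f y) ≤ C * N f)

/-- The associate (Köthe dual) norm of a function norm `N`. -/
def assocNormOf (n : ℕ) (N : ((Fin n → ℝ) → ℝ≥0∞) → ℝ≥0∞)
    (f : (Fin n → ℝ) → ℝ≥0∞) : ℝ≥0∞ :=
  ⨆ (g : (Fin n → ℝ) → ℝ≥0∞) (_ : Measurable g) (_ : N g = 1), ∫⁻ x, f x * g x

/-- The `θ`-convexification of a function norm: `‖f‖_{X^θ} = ‖|f|^θ‖_X^{1/θ}`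
(here stated with `θ` in place of `1/p`, so `X^{1/p}` is `convexPow n (1/p) N`). -/
def convexPow (n : ℕ) (θ : ℝ) (N : ((Fin n → ℝ) → ℝ≥0∞) → ℝ≥0∞)
    (f : (Fin n → ℝ) → ℝ≥0∞) : ℝ≥0∞ :=
  N (fun x => f x ^ θ) ^ (1 / θ)

/-- The associate space norm of the mixed-norm Herz space, for complex-valued functions. -/
def herzAssocNormC (n : ℕ) (α : Fin n → ℝ) (p q : Fin n → ℝ≥0∞)
    (f : (Fin n → ℝ) → ℂ) : ℝ≥0∞ :=
  ⨆ (g : (Fin n → ℝ) → ℂ) (_ : Measurable g) (_ : herzNormC n α p q g = 1),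
    ∫⁻ x, (‖f x * g x‖₊ : ℝ≥0∞)

/-- rational-endpoint uncentered maximal function with respect to a measure. -/
def Mmu (μ : Measure ℝ) (f : ℝ → ℝ≥0∞) (x : ℝ) : ℝ≥0∞ :=
  ⨆ (ab : ℚ × ℚ) (_ : x ∈ Set.Ioo (ab.1 : ℝ) (ab.2 : ℝ)),
    (μ (Set.Ioo (ab.1 : ℝ) (ab.2 : ℝ)))⁻¹ * ∫⁻ y in Set.Ioo (ab.1 : ℝ) (ab.2 : ℝ), f y ∂μ

lemma Mmu_measurable (μ : Measure ℝ) (f : ℝ → ℝ≥0∞) : Measurable (Mmu μ f) := by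
  unfold Mmu
  refine Measurable.iSup fun ab => ?_
  have : (fun x : ℝ => ⨆ (_ : x ∈ Set.Ioo (ab.1 : ℝ) (ab.2 : ℝ)),
    (μ (Set.Ioo (ab.1 : ℝ) (ab.2 : ℝ)))⁻¹ * ∫⁻ y in Set.Ioo (ab.1 : ℝ) (ab.2 : ℝ), f y ∂μ)
    = (Set.Ioo (ab.1 : ℝ) (ab.2 : ℝ)).indicator (fun _ => (μ (Set.Ioo (ab.1 : ℝ) (ab.2 : ℝ)))⁻¹ * ∫⁻ y in Set.Ioo (ab.1 : ℝ) (ab.2 : ℝ), f y ∂μ) := by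
    funext x
    by_cases h : x ∈ Set.Ioo (ab.1 : ℝ) (ab.2 : ℝ)
    · rw [Set.indicator_of_mem h, iSup_pos h]
    · rw [Set.indicator_of_notMem h, iSup_neg h]; rfl
  rw [this]
  exact measurable_const.indicator measurableSet_Ioo

lemma le_Mmu (μ : Measure ℝ) (f : ℝ → ℝ≥0∞) (x : ℝ) (a b : ℚ) (h : x ∈ Set.Ioo (a : ℝ) (b : ℝ)) :
    (μ (Set.Ioo (a : ℝ) (b : ℝ)))⁻¹ * ∫⁻ y in Set.Ioo (a : ℝ) (b : ℝ), f y ∂μ ≤ Mmu μ f x :=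
  le_iSup₂_of_le (f := fun (ab : ℚ × ℚ) (_ : x ∈ Set.Ioo (ab.1 : ℝ) (ab.2 : ℝ)) =>
    (μ (Set.Ioo (ab.1 : ℝ) (ab.2 : ℝ)))⁻¹ * ∫⁻ y in Set.Ioo (ab.1 : ℝ) (ab.2 : ℝ), f y ∂μ) (a, b) h le_rfl

/-- overlap lemma -/
lemma overlap_aux (s : Finset (ℚ × ℚ)) : ∃ t ⊆ s,
    (⋃ ab ∈ s, Set.Ioo (ab.1 : ℝ) (ab.2 : ℝ)) ⊆ (⋃ ab ∈ t, Set.Ioo (ab.1 : ℝ) (ab.2 : ℝ)) ∧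
    ∀ x : ℝ, (t.filter (fun ab => x ∈ Set.Ioo (ab.1 : ℝ) (ab.2 : ℝ))).card ≤ 2 := by
  classical
  induction' hn : s.card using Nat.strong_induction_on with n ih generalizing s
  by_cases hx : ∀ x : ℝ, (s.filter (fun ab => x ∈ Set.Ioo (ab.1 : ℝ) (ab.2 : ℝ))).card ≤ 2
  · exact ⟨s, subset_rfl, subset_rfl, hx⟩
  push Not at hx
  obtain ⟨x, hx⟩ := hx
  set F := s.filter (fun ab => x ∈ Set.Ioo (ab.1 : ℝ) (ab.2 : ℝ)) with hF
  have hne : F.Nonempty := Finset.card_pos.1 (by omega)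
  obtain ⟨c, hc, hcm⟩ := F.exists_min_image (fun ab => ab.1) hne
  obtain ⟨d, hd, hdm⟩ := F.exists_max_image (fun ab => ab.2) hne
  have : ∃ e ∈ F, e ≠ c ∧ e ≠ d := by
    by_contra hcon
    push Not at hcon
    have : F ⊆ {c, d} := by
      intro e he
      by_cases h1 : e = c
      · simp [h1]
      · simp [hcon e he h1]
    have := Finset.card_le_card this
    have := Finset.card_le_two (a := c) (b := d)
    omega
  obtain ⟨e, he, hec, hed⟩ := this
  have heS : e ∈ s := (Finset.mem_filter.1 he).1
  obtain ⟨t, hts, hcov, hov⟩ := ih (s.erase e).card (by rw [← hn]; exact Finset.card_erase_lt_of_mem heS) _ rfl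
  refine ⟨t, hts.trans (Finset.erase_subset _ _), subset_trans ?_ hcov, hov⟩
  intro y hy
  simp only [Set.mem_iUnion] at hy ⊢
  obtain ⟨i, hi, hyi⟩ := hy
  by_cases hie : i = e
  · subst hie
    have h1 := hcm i he
    have h2 := hdm i he
    have hxc := (Finset.mem_filter.1 hc).2
    have hxd := (Finset.mem_filter.1 hd).2
    have h1' : (c.1 : ℝ) ≤ i.1 := by exact_mod_cast h1
    have h2' : (i.2 : ℝ) ≤ d.2 := by exact_mod_cast h2
    simp only [Set.mem_Ioo] at hyi hxc hxd
    by_cases hyx : y ≤ x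
    · refine ⟨c, Finset.mem_erase.2 ⟨hec.symm, (Finset.mem_filter.1 hc).1⟩, ?_, ?_⟩ <;> linarith
    · refine ⟨d, Finset.mem_erase.2 ⟨hed.symm, (Finset.mem_filter.1 hd).1⟩, ?_, ?_⟩ <;> linarith
  · exact ⟨i, Finset.mem_erase.2 ⟨hie, hi⟩, hyi⟩

lemma cover_bound (μ ν : Measure ℝ) (T : Set (ℚ × ℚ))
    (h : ∀ ab ∈ T, μ (Set.Ioo (ab.1 : ℝ) (ab.2 : ℝ)) ≤ ν (Set.Ioo (ab.1 : ℝ) (ab.2 : ℝ))) :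
    μ (⋃ ab ∈ T, Set.Ioo (ab.1 : ℝ) (ab.2 : ℝ)) ≤ 2 * ν Set.univ := by
  classical
  have hU : (⋃ ab ∈ T, Set.Ioo (ab.1 : ℝ) (ab.2 : ℝ)) =
      ⋃ s : Finset T, ⋃ ab ∈ s.image Subtype.val, Set.Ioo (ab.1 : ℝ) (ab.2 : ℝ) := by
    ext x
    simp only [Set.mem_iUnion]
    constructor
    · rintro ⟨ab, hab, hx⟩
      exact ⟨{⟨ab, hab⟩}, ab, by simp, hx⟩
    · rintro ⟨s, ab, hab, hx⟩
      obtain ⟨c, _, rfl⟩ := Finset.mem_image.1 hab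
      exact ⟨c, c.2, hx⟩
  rw [hU, Directed.measure_iUnion]
  swap
  · refine Monotone.directed_le fun s t hst => ?_
    exact Set.biUnion_subset_biUnion_left (Finset.image_subset_image hst)
  refine iSup_le fun s' => ?_
  have hs : ∀ i ∈ s'.image Subtype.val, i ∈ T := by
    intro i hi
    obtain ⟨c, _, rfl⟩ := Finset.mem_image.1 hi
    exact c.2
  generalize s'.image Subtype.val = s at hs ⊢
  obtain ⟨t, hts, hcov, hov⟩ := overlap_aux s
  calc μ (⋃ ab ∈ s, Set.Ioo (ab.1 : ℝ) (ab.2 : ℝ)) ≤ μ (⋃ ab ∈ t, Set.Ioo (ab.1 : ℝ) (ab.2 : ℝ)) := measure_mono hcov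
    _ ≤ ∑ ab ∈ t, μ (Set.Ioo (ab.1 : ℝ) (ab.2 : ℝ)) := measure_biUnion_finset_le _ _
    _ ≤ ∑ ab ∈ t, ν (Set.Ioo (ab.1 : ℝ) (ab.2 : ℝ)) := Finset.sum_le_sum fun i hi => h i (hs _ (hts hi))
    _ = ∑ ab ∈ t, ∫⁻ x, (Set.Ioo (ab.1 : ℝ) (ab.2 : ℝ)).indicator 1 x ∂ν := by
        refine Finset.sum_congr rfl fun i _ => ?_
        rw [lintegral_indicator_one measurableSet_Ioo]
    _ = ∫⁻ x, ∑ ab ∈ t, (Set.Ioo (ab.1 : ℝ) (ab.2 : ℝ)).indicator 1 x ∂ν := by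
        rw [lintegral_finsetSum]
        intro i _
        exact measurable_one.indicator measurableSet_Ioo
    _ ≤ ∫⁻ x, 2 ∂ν := by
        refine lintegral_mono fun x => ?_
        simp only [Set.indicator_apply, Pi.one_apply]
        rw [Finset.sum_ite]
        simp only [Finset.sum_const, nsmul_eq_mul, mul_one, Finset.sum_const_zero, add_zero]
        exact_mod_cast hov x
    _ = 2 * ν Set.univ := by simp

lemma weak_type (μ : Measure ℝ) (f : ℝ → ℝ≥0∞) (hf : Measurable f) (l : ℝ≥0∞) (hl0 : l ≠ 0) (hl : l ≠ ∞) :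
    μ {x | 2 * l < Mmu μ f x} ≤ 2 * (l⁻¹ * ∫⁻ x, {x | l < f x}.indicator f x ∂μ) := by
  set g : ℝ → ℝ≥0∞ := fun x => l⁻¹ * {x | l < f x}.indicator f x with hg
  have hms : MeasurableSet {x | l < f x} := measurableSet_lt measurable_const hf
  have hgm : Measurable g := (hf.indicator hms).const_mul _
  have key := cover_bound μ (μ.withDensity g)
    {ab | μ (Set.Ioo (ab.1 : ℝ) (ab.2 : ℝ)) ≤ μ.withDensity g (Set.Ioo (ab.1 : ℝ) (ab.2 : ℝ))} (fun _ h => h)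
  have hv : (μ.withDensity g) Set.univ = l⁻¹ * ∫⁻ x, {x | l < f x}.indicator f x ∂μ := by
    rw [withDensity_apply _ MeasurableSet.univ, Measure.restrict_univ, lintegral_const_mul _ (hf.indicator hms)]
  rw [hv] at key
  refine le_trans (measure_mono ?_) key
  intro x hx
  simp only [Set.mem_ofPred_eq] at hx
  unfold Mmu at hx
  obtain ⟨ab, hx⟩ := lt_iSup_iff.1 hx
  obtain ⟨hxab, hx⟩ := lt_iSup_iff.1 hx
  simp only [Set.mem_iUnion]
  refine ⟨ab, ?_, hxab⟩
  simp only [Set.mem_ofPred_eq]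
  set I := Set.Ioo (ab.1 : ℝ) (ab.2 : ℝ)
  rw [withDensity_apply _ measurableSet_Ioo]
  have hfin : μ I ≠ ∞ := by
    intro h
    rw [h] at hx; simp at hx
  by_cases h0 : μ I = 0
  · rw [h0]; exact zero_le
  have h1 : 2 * l * μ I ≤ ∫⁻ y in I, f y ∂μ := by
    rw [mul_comm (μ I)⁻¹, ← div_eq_mul_inv] at hx
    exact (ENNReal.le_div_iff_mul_le (Or.inl h0) (Or.inl hfin)).1 hx.le
  have h2 : ∫⁻ y in I, f y ∂μ ≤ ∫⁻ y in I, {x | l < f x}.indicator f y ∂μ + l * μ I := by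
    calc ∫⁻ y in I, f y ∂μ ≤ ∫⁻ y in I, ({x | l < f x}.indicator f y + l) ∂μ := by
          refine lintegral_mono fun y => ?_
          by_cases hy : l < f y
          · rw [Set.indicator_of_mem (by exact hy)]; exact le_self_add
          · rw [Set.indicator_of_notMem (by exact hy)]; simpa using hy
      _ = _ := by
          rw [lintegral_add_right _ measurable_const]; simp
  have h3 : l * μ I ≤ ∫⁻ y in I, {x | l < f x}.indicator f y ∂μ := by
    have hne : l * μ I ≠ ∞ := ENNReal.mul_ne_top hl hfin
    have := h1.trans h2
    rw [two_mul, add_mul] at this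
    exact (ENNReal.add_le_add_iff_right hne).1 this
  rw [lintegral_const_mul _ (hf.indicator hms)]
  calc μ I = l⁻¹ * (l * μ I) := by rw [← mul_assoc, ENNReal.inv_mul_cancel hl0 hl, one_mul]
    _ ≤ _ := by gcongr

lemma two_rpow_lt {a b : ℝ} : (2 : ℝ≥0∞) ^ a < (2 : ℝ≥0∞) ^ b ↔ a < b :=
  ⟨fun h => by
    by_contra hc
    exact absurd h (not_lt.2 (ENNReal.rpow_le_rpow_of_exponent_le (by norm_num) (not_lt.1 hc))),
   fun h => ENNReal.rpow_lt_rpow_of_exponent_lt (by norm_num) (by norm_num) h⟩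

lemma two_rpow_ne_top (a : ℝ) : (2 : ℝ≥0∞) ^ a ≠ ∞ :=
  ENNReal.rpow_ne_top_of_ne_zero (by norm_num) (by norm_num)

lemma two_rpow_ne_zero (a : ℝ) : (2 : ℝ≥0∞) ^ a ≠ 0 := by
  have := ENNReal.rpow_pos (p := a) (x := 2) (by norm_num) (by norm_num)
  exact this.ne'

lemma exists_dyadic (x : ℝ≥0∞) (h0 : x ≠ 0) (h : x ≠ ∞) :
    ∃ m : ℤ, (2 : ℝ≥0∞) ^ (m : ℝ) < x ∧ x ≤ (2 : ℝ≥0∞) ^ ((m : ℝ) + 1) := by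
  obtain ⟨m, h1, h2⟩ := ENNReal.exists_mem_Ioc_zpow h0 h (y := 2) (by norm_num) (by norm_num)
  refine ⟨m, ?_, ?_⟩
  · rwa [ENNReal.rpow_intCast]
  · have : (m : ℝ) + 1 = ((m + 1 : ℤ) : ℝ) := by push_cast; ring
    rwa [this, ENNReal.rpow_intCast]

/-- two-sided geometric constant -/
def geoC (s : ℝ) : ℝ≥0∞ := (1 - (2 : ℝ≥0∞) ^ (-s))⁻¹

lemma geoC_ne_top {s : ℝ} (hs : 0 < s) : geoC s ≠ ∞ := by
  unfold geoC
  rw [ENNReal.inv_ne_top]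
  have : (2 : ℝ≥0∞) ^ (-s) < 1 := by
    rw [← ENNReal.rpow_zero (x := 2), two_rpow_lt]; linarith
  exact (tsub_pos_of_lt this).ne'

lemma geoC_eq (s : ℝ) : ∑' i : ℕ, (2 : ℝ≥0∞) ^ (-(i : ℝ) * s) = geoC s := by
  unfold geoC
  rw [← ENNReal.tsum_geometric]
  congr 1; funext i
  rw [← ENNReal.rpow_natCast, ← ENNReal.rpow_mul]
  congr 1; ring

lemma one_le_geoC {s : ℝ} : 1 ≤ geoC s := by
  rw [← geoC_eq]
  calc (1 : ℝ≥0∞) = (2 : ℝ≥0∞) ^ (-((0 : ℕ) : ℝ) * s) := by simp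
    _ ≤ _ := ENNReal.le_tsum (f := fun i : ℕ => (2 : ℝ≥0∞) ^ (-(i : ℝ) * s)) 0

lemma geo_sum_le (s : ℝ) (hs : 0 < s) (x : ℝ≥0∞) :
    ∑' j : ℤ, (if (2 : ℝ≥0∞) ^ (j : ℝ) < x then (2 : ℝ≥0∞) ^ ((j : ℝ) * s) else 0) ≤ geoC s * x ^ s := by
  by_cases h0 : x = 0
  · subst h0; simp
  by_cases h : x = ∞
  · subst h
    rw [ENNReal.top_rpow_of_pos hs, ENNReal.mul_top (zero_lt_one.trans_le one_le_geoC).ne']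
    exact le_top
  obtain ⟨m, h1, h2⟩ := exists_dyadic x h0 h
  have hinj : Function.Injective (fun i : ℕ => m - (i : ℤ)) := by
    intro a b hab; simp at hab; exact hab
  rw [← hinj.tsum_eq]
  · calc ∑' i : ℕ, (if (2 : ℝ≥0∞) ^ ((m - (i : ℤ) : ℤ) : ℝ) < x then (2 : ℝ≥0∞) ^ (((m - (i : ℤ) : ℤ) : ℝ) * s) else 0)
        ≤ ∑' i : ℕ, (2 : ℝ≥0∞) ^ (-(i : ℝ) * s) * (2 : ℝ≥0∞) ^ ((m : ℝ) * s) := by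
          refine ENNReal.tsum_le_tsum fun i => ?_
          split_ifs
          · rw [← ENNReal.rpow_add _ _ (by norm_num) (by norm_num)]
            apply le_of_eq; congr 1; push_cast; ring
          · exact zero_le
      _ = geoC s * ((2 : ℝ≥0∞) ^ (m : ℝ)) ^ s := by
          rw [ENNReal.tsum_mul_right, geoC_eq, ENNReal.rpow_mul]
      _ ≤ _ := by gcongr
  · intro j hj
    simp only [Function.mem_support, ne_eq, ite_eq_right_iff, Classical.not_imp] at hj
    have := hj.1.trans_le h2
    rw [two_rpow_lt] at this
    have : j < m + 1 := by exact_mod_cast this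
    exact ⟨(m - j).toNat, by simp only; omega⟩

lemma rpow_le_dyadic (p : ℝ) (hp : 0 < p) (g : ℝ≥0∞) :
    g ^ p ≤ ∑' j : ℤ, (if 2 * (2 : ℝ≥0∞) ^ (j : ℝ) < g then (2 : ℝ≥0∞) ^ (((j : ℝ) + 2) * p) else 0) := by
  have e2 : ∀ j : ℝ, 2 * (2 : ℝ≥0∞) ^ j = (2 : ℝ≥0∞) ^ (j + 1) := by
    intro j
    rw [ENNReal.rpow_add _ _ (by norm_num) (by norm_num), ENNReal.rpow_one, mul_comm]
  by_cases h0 : g = 0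
  · subst h0; simp [hp]
  by_cases h : g = ∞
  · subst h
    have hz : ∀ j : ℤ, 2 * (2 : ℝ≥0∞) ^ (j : ℝ) < ∞ := fun j => by
      rw [e2]; exact (two_rpow_ne_top _).lt_top
    simp only [hz, if_true]
    have : (∑' i : ℕ, (1 : ℝ≥0∞)) ≤ ∑' j : ℤ, (2 : ℝ≥0∞) ^ (((j : ℝ) + 2) * p) := by
      calc (∑' i : ℕ, (1 : ℝ≥0∞)) ≤ ∑' i : ℕ, (2 : ℝ≥0∞) ^ ((((i : ℤ) : ℝ) + 2) * p) := by
            refine ENNReal.tsum_le_tsum fun i => ?_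
            exact ENNReal.one_le_rpow (by norm_num) (by positivity)
        _ ≤ _ := ENNReal.tsum_comp_le_tsum_of_injective Nat.cast_injective
            (fun j : ℤ => (2 : ℝ≥0∞) ^ (((j : ℝ) + 2) * p))
    rw [ENNReal.tsum_const_eq_top_of_ne_zero one_ne_zero] at this
    exact le_top.trans this
  obtain ⟨m, h1, h2⟩ := exists_dyadic g h0 h
  refine le_trans ?_ (ENNReal.le_tsum (m - 1))
  rw [if_pos]
  · calc g ^ p ≤ ((2 : ℝ≥0∞) ^ ((m : ℝ) + 1)) ^ p := by gcongr
      _ = _ := by rw [← ENNReal.rpow_mul]; congr 2; push_cast; ring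
  · rw [e2]; push_cast; simpa using h1

lemma strong_type (p : ℝ) (hp : 1 < p) : ∃ C : ℝ≥0∞, C ≠ ∞ ∧ ∀ (μ : Measure ℝ) (f : ℝ → ℝ≥0∞), Measurable f →
    ∫⁻ x, Mmu μ f x ^ p ∂μ ≤ C * ∫⁻ x, f x ^ p ∂μ := by
  refine ⟨2 * (2 : ℝ≥0∞) ^ (2 * p) * geoC (p - 1), ?_, ?_⟩
  · exact ENNReal.mul_ne_top (ENNReal.mul_ne_top (by norm_num) (two_rpow_ne_top _)) (geoC_ne_top (by linarith))
  intro μ f hf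
  have hM := Mmu_measurable μ f
  have hms : ∀ j : ℤ, MeasurableSet {x | (2 : ℝ≥0∞) ^ (j : ℝ) < f x} := fun j => measurableSet_lt measurable_const hf
  have hmM : ∀ j : ℤ, MeasurableSet {x | 2 * (2 : ℝ≥0∞) ^ (j : ℝ) < Mmu μ f x} := fun j => measurableSet_lt measurable_const hM
  calc ∫⁻ x, Mmu μ f x ^ p ∂μ
      ≤ ∫⁻ x, ∑' j : ℤ, {x | 2 * (2 : ℝ≥0∞) ^ (j : ℝ) < Mmu μ f x}.indicator (fun _ => (2 : ℝ≥0∞) ^ (((j : ℝ) + 2) * p)) x ∂μ := by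
        refine lintegral_mono fun x => (rpow_le_dyadic p (by linarith) _).trans (le_of_eq ?_)
        simp only [Set.indicator_apply, Set.mem_ofPred_eq]
    _ = ∑' j : ℤ, (2 : ℝ≥0∞) ^ (((j : ℝ) + 2) * p) * μ {x | 2 * (2 : ℝ≥0∞) ^ (j : ℝ) < Mmu μ f x} := by
        rw [lintegral_tsum]
        · congr 1; funext j
          rw [lintegral_indicator_const (hmM j)]
        · intro j; exact (measurable_const.indicator (hmM j)).aemeasurable
    _ ≤ ∑' j : ℤ, (2 : ℝ≥0∞) ^ (((j : ℝ) + 2) * p) * (2 * (((2 : ℝ≥0∞) ^ (j : ℝ))⁻¹ * ∫⁻ x, {x | (2 : ℝ≥0∞) ^ (j : ℝ) < f x}.indicator f x ∂μ)) := by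
        refine ENNReal.tsum_le_tsum fun j => ?_
        gcongr
        exact weak_type μ f hf _ (two_rpow_ne_zero _) (two_rpow_ne_top _)
    _ = ∑' j : ℤ, ∫⁻ x, (2 * (2 : ℝ≥0∞) ^ (2 * p)) * ((2 : ℝ≥0∞) ^ ((j : ℝ) * (p - 1)) * {x | (2 : ℝ≥0∞) ^ (j : ℝ) < f x}.indicator f x) ∂μ := by
        congr 1; funext j
        rw [lintegral_const_mul _ ((hf.indicator (hms j)).const_mul _), lintegral_const_mul _ (hf.indicator (hms j))]
        rw [← ENNReal.rpow_neg]
        have : (2 : ℝ≥0∞) ^ (((j : ℝ) + 2) * p) = (2 : ℝ≥0∞) ^ (2 * p) * (2 : ℝ≥0∞) ^ ((j : ℝ) * (p - 1)) * (2 : ℝ≥0∞) ^ (j : ℝ) := by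
          rw [← ENNReal.rpow_add _ _ (by norm_num) (by norm_num), ← ENNReal.rpow_add _ _ (by norm_num) (by norm_num)]
          congr 1; ring
        rw [this]
        have h1 : (2 : ℝ≥0∞) ^ (j : ℝ) * (2 : ℝ≥0∞) ^ (-(j : ℝ)) = 1 := by
          rw [← ENNReal.rpow_add _ _ (by norm_num) (by norm_num)]; simp
        calc _ = (2 * (2 : ℝ≥0∞) ^ (2 * p)) * ((2 : ℝ≥0∞) ^ ((j : ℝ) * (p - 1)) * ∫⁻ x, {x | (2 : ℝ≥0∞) ^ (j : ℝ) < f x}.indicator f x ∂μ) * ((2 : ℝ≥0∞) ^ (j : ℝ) * (2 : ℝ≥0∞) ^ (-(j : ℝ))) := by ring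
          _ = _ := by rw [h1, mul_one]
    _ = ∫⁻ x, ∑' j : ℤ, (2 * (2 : ℝ≥0∞) ^ (2 * p)) * ((2 : ℝ≥0∞) ^ ((j : ℝ) * (p - 1)) * {x | (2 : ℝ≥0∞) ^ (j : ℝ) < f x}.indicator f x) ∂μ := by
        rw [lintegral_tsum]
        intro j; exact (((hf.indicator (hms j)).const_mul _).const_mul _).aemeasurable
    _ ≤ ∫⁻ x, 2 * (2 : ℝ≥0∞) ^ (2 * p) * geoC (p - 1) * f x ^ p ∂μ := by
        refine lintegral_mono fun x => ?_
        simp only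
        rw [ENNReal.tsum_mul_left, mul_assoc (2 * (2 : ℝ≥0∞) ^ (2 * p))]
        refine mul_le_mul_right ?_ _
        calc ∑' j : ℤ, (2 : ℝ≥0∞) ^ ((j : ℝ) * (p - 1)) * {x | (2 : ℝ≥0∞) ^ (j : ℝ) < f x}.indicator f x
            = ∑' j : ℤ, (if (2 : ℝ≥0∞) ^ (j : ℝ) < f x then (2 : ℝ≥0∞) ^ ((j : ℝ) * (p - 1)) else 0) * f x := by
              congr 1; funext j
              simp only [Set.indicator_apply, Set.mem_ofPred_eq]
              split_ifs <;> simp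
          _ ≤ geoC (p - 1) * f x ^ (p - 1) * f x := by
              rw [ENNReal.tsum_mul_right]
              gcongr
              exact geo_sum_le (p - 1) (by linarith) _
          _ = geoC (p - 1) * f x ^ p := by
              rw [mul_assoc]; congr 1
              conv_rhs => rw [show p = (p - 1) + 1 by ring, ENNReal.rpow_add_of_nonneg _ _ (by linarith) (by norm_num), ENNReal.rpow_one]
    _ = _ := lintegral_const_mul _ (hf.pow_const _)

/-- the maximal function -/
def Mx (f : ℝ → ℝ≥0∞) : ℝ → ℝ≥0∞ := Mmu volume f

/-- A one weights. -/
def A1 (K : ℝ≥0∞) (u : ℝ → ℝ≥0∞) : Prop :=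
  Measurable u ∧ ∀ᵐ x, u x ≠ 0 ∧ u x ≠ ∞ ∧ Mx u x ≤ K * u x

/-- testing condition on rational intervals -/
def ApCond (p : ℝ) (A : ℝ≥0∞) (w σ : ℝ → ℝ≥0∞) : Prop :=
  ∀ a b : ℚ, a < b → (∫⁻ x in Set.Ioo (a : ℝ) (b : ℝ), w x) ≠ 0 ∧ (∫⁻ x in Set.Ioo (a : ℝ) (b : ℝ), w x) ≠ ∞ ∧
    (∫⁻ x in Set.Ioo (a : ℝ) (b : ℝ), σ x) ≠ 0 ∧ (∫⁻ x in Set.Ioo (a : ℝ) (b : ℝ), σ x) ≠ ∞ ∧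
    (∫⁻ x in Set.Ioo (a : ℝ) (b : ℝ), w x) * (∫⁻ x in Set.Ioo (a : ℝ) (b : ℝ), σ x) ^ (p - 1) ≤
      A * (volume (Set.Ioo (a : ℝ) (b : ℝ))) ^ p

lemma vol_Ioo_ne_zero (a b : ℚ) (h : a < b) : volume (Set.Ioo (a : ℝ) (b : ℝ)) ≠ 0 := by
  rw [Real.volume_Ioo]
  have : (a : ℝ) < b := by exact_mod_cast h
  simpa using this

lemma vol_Ioo_ne_top (a b : ℝ) : volume (Set.Ioo (a : ℝ) (b : ℝ)) ≠ ∞ := by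
  rw [Real.volume_Ioo]
  exact ENNReal.ofReal_ne_top

lemma lerner_pt (p : ℝ) (hp : 1 < p) (A : ℝ≥0∞) (w σ : ℝ → ℝ≥0∞) (hwm : Measurable w) (hσm : Measurable σ)
    (hw : ∀ᵐ x, w x ≠ 0 ∧ w x ≠ ∞) (hσ : ∀ᵐ x, σ x ≠ 0 ∧ σ x ≠ ∞) (hA : ApCond p A w σ)
    (f : ℝ → ℝ≥0∞) (hf : Measurable f) (x : ℝ) :
    Mx f x ^ (p - 1) ≤ A * Mmu (volume.withDensity w)
      (fun y => (w y)⁻¹ * Mmu (volume.withDensity σ) (fun z => (σ z)⁻¹ * f z) y ^ (p - 1)) x := by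
  have hp1 : 0 < p - 1 := by linarith
  set g := Mmu (volume.withDensity σ) (fun z => (σ z)⁻¹ * f z) with hg
  have hgm : Measurable g := Mmu_measurable _ _
  set R := A * Mmu (volume.withDensity w) (fun y => (w y)⁻¹ * g y ^ (p - 1)) x with hR
  suffices h : Mx f x ≤ R ^ (p - 1)⁻¹ by
    calc Mx f x ^ (p - 1) ≤ (R ^ (p - 1)⁻¹) ^ (p - 1) := by gcongr
      _ = R := ENNReal.rpow_inv_rpow hp1.ne' _
  refine iSup₂_le fun ab hx => ?_
  obtain ⟨a, b⟩ := ab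
  simp only at hx ⊢
  have hab : a < b := by exact_mod_cast hx.1.trans hx.2
  obtain ⟨hW0, hWt, hS0, hSt, hAA⟩ := hA a b hab
  have hV0 := vol_Ioo_ne_zero a b hab
  have hVt := vol_Ioo_ne_top a b
  set I := Set.Ioo (a : ℝ) (b : ℝ) with hI
  have hIm : MeasurableSet I := measurableSet_Ioo
  set W := ∫⁻ x in I, w x
  set S := ∫⁻ x in I, σ x
  set V := volume I
  set J := ∫⁻ x in I, f x with hJ
  rw [ENNReal.le_rpow_inv_iff hp1]
  have hμσ : (volume.withDensity σ) I = S := withDensity_apply _ hIm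
  have hμw : (volume.withDensity w) I = W := withDensity_apply _ hIm
  have e1 : ∫⁻ y in I, (σ y)⁻¹ * f y ∂(volume.withDensity σ) = J := by
    rw [setLIntegral_withDensity_eq_setLIntegral_mul _ hσm (g := fun y => (σ y)⁻¹ * f y) (hσm.inv.mul hf) hIm]
    refine lintegral_congr_ae (ae_restrict_of_ae ?_)
    filter_upwards [hσ] with y hy
    simp only [Pi.mul_apply]
    rw [← mul_assoc, ENNReal.mul_inv_cancel hy.1 hy.2, one_mul]
  have e2 : ∀ y ∈ I, S⁻¹ * J ≤ g y := by
    intro y hy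
    have := le_Mmu (volume.withDensity σ) (fun z => (σ z)⁻¹ * f z) y a b hy
    rwa [e1, hμσ] at this
  have e3 : ∫⁻ y in I, (w y)⁻¹ * g y ^ (p - 1) ∂(volume.withDensity w) = ∫⁻ y in I, g y ^ (p - 1) := by
    rw [setLIntegral_withDensity_eq_setLIntegral_mul _ hwm (g := fun y => (w y)⁻¹ * g y ^ (p - 1)) (hwm.inv.mul (hgm.pow_const _)) hIm]
    refine lintegral_congr_ae (ae_restrict_of_ae ?_)
    filter_upwards [hw] with y hy
    simp only [Pi.mul_apply]
    rw [← mul_assoc, ENNReal.mul_inv_cancel hy.1 hy.2, one_mul]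
  have e4 : (S⁻¹ * J) ^ (p - 1) * V ≤ ∫⁻ y in I, g y ^ (p - 1) := by
    rw [← setLIntegral_const]
    refine setLIntegral_mono (hgm.pow_const _) fun y hy => ?_
    have := e2 y hy
    gcongr
  have e5 : W⁻¹ * ((S⁻¹ * J) ^ (p - 1) * V) ≤ Mmu (volume.withDensity w) (fun y => (w y)⁻¹ * g y ^ (p - 1)) x := by
    refine le_trans ?_ (le_Mmu (volume.withDensity w) (fun y => (w y)⁻¹ * g y ^ (p - 1)) x a b hx)
    rw [e3, hμw]
    gcongr
  refine le_trans ?_ (mul_le_mul_right e5 A)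
  have hSp0 : S ^ (p - 1) ≠ 0 := by simp [ENNReal.rpow_eq_zero_iff, hS0, hSt]
  have hSpt : S ^ (p - 1) ≠ ∞ := ENNReal.rpow_ne_top_of_nonneg hp1.le hSt
  rw [ENNReal.mul_rpow_of_nonneg _ _ hp1.le, ENNReal.mul_rpow_of_nonneg _ _ hp1.le, ENNReal.inv_rpow, ENNReal.inv_rpow]
  have hVp : V ^ p = V ^ (p - 1) * V := by
    conv_lhs => rw [show p = (p - 1) + 1 by ring, ENNReal.rpow_add _ _ hV0 hVt, ENNReal.rpow_one]
  rw [hVp] at hAA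
  have hVp0 : V ^ (p - 1) ≠ 0 := by simp [ENNReal.rpow_eq_zero_iff, hV0, hVt]
  have hVpt : V ^ (p - 1) ≠ ∞ := ENNReal.rpow_ne_top_of_nonneg hp1.le hVt
  calc (V ^ (p - 1))⁻¹ * J ^ (p - 1)
      = (V ^ (p - 1))⁻¹ * (W⁻¹ * (S ^ (p - 1))⁻¹) * (W * S ^ (p - 1)) * J ^ (p - 1) := by
        have h1 := ENNReal.inv_mul_cancel hW0 hWt
        have h2 := ENNReal.inv_mul_cancel hSp0 hSpt
        calc _ = (V ^ (p - 1))⁻¹ * J ^ (p - 1) * (W⁻¹ * W) * ((S ^ (p - 1))⁻¹ * S ^ (p - 1)) := by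
              rw [h1, h2]; simp
          _ = _ := by ring
    _ ≤ (V ^ (p - 1))⁻¹ * (W⁻¹ * (S ^ (p - 1))⁻¹) * (A * (V ^ (p - 1) * V)) * J ^ (p - 1) := by gcongr
    _ = A * (W⁻¹ * ((S ^ (p - 1))⁻¹ * J ^ (p - 1) * V)) * ((V ^ (p - 1))⁻¹ * V ^ (p - 1)) := by ring
    _ = _ := by rw [ENNReal.inv_mul_cancel hVp0 hVpt, mul_one]

lemma muck0 (p : ℝ) (hp : 1 < p) (A : ℝ≥0∞) (hAt : A ≠ ∞) : ∃ N : ℝ≥0∞, N ≠ ∞ ∧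
    ∀ (w σ : ℝ → ℝ≥0∞) (_ : Measurable w) (_ : Measurable σ)
    (_ : ∀ᵐ x, w x ≠ 0 ∧ w x ≠ ∞) (_ : ∀ᵐ x, σ x ≠ 0 ∧ σ x ≠ ∞) (_ : ApCond p A w σ)
    (_ : ∀ᵐ x, σ x = w x ^ (-(p - 1)⁻¹))
    (f : ℝ → ℝ≥0∞) (_ : Measurable f), ∫⁻ x, Mx f x ^ p * w x ≤ N * ∫⁻ x, f x ^ p * w x := by
  have hp1 : 0 < p - 1 := by linarith
  set r := p * (p - 1)⁻¹ with hr
  have hr1 : 1 < r := by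
    rw [hr, ← div_eq_mul_inv, lt_div_iff₀ hp1]; linarith
  have hrr : (p - 1) * r = p := by rw [hr]; field_simp
  obtain ⟨C1, hC1, H1⟩ := strong_type p hp
  obtain ⟨C2, hC2, H2⟩ := strong_type r hr1
  refine ⟨A ^ r * (C2 * C1), ENNReal.mul_ne_top (ENNReal.rpow_ne_top_of_nonneg (by linarith) hAt) (ENNReal.mul_ne_top hC2 hC1), ?_⟩
  intro w σ hwm hσm hw hσ hA hrel f hf
  set g := Mmu (volume.withDensity σ) (fun z => (σ z)⁻¹ * f z) with hg
  have hgm : Measurable g := Mmu_measurable _ _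
  set h : ℝ → ℝ≥0∞ := fun y => (w y)⁻¹ * g y ^ (p - 1) with hh
  have hhm : Measurable h := hwm.inv.mul (hgm.pow_const _)
  have wd : ∀ (v k : ℝ → ℝ≥0∞), Measurable v → Measurable k → ∫⁻ x, k x ∂(volume.withDensity v) = ∫⁻ x, k x * v x := by
    intro v k hv hk
    rw [lintegral_withDensity_eq_lintegral_mul _ hv hk]
    simp only [Pi.mul_apply, mul_comm]
  calc ∫⁻ x, Mx f x ^ p * w x
      ≤ ∫⁻ x, A ^ r * (Mmu (volume.withDensity w) h x ^ r * w x) := by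
        refine lintegral_mono fun x => ?_
        have := lerner_pt p hp A w σ hwm hσm hw hσ hA f hf x
        simp only
        rw [← mul_assoc]
        refine mul_le_mul_left ?_ _
        calc Mx f x ^ p = (Mx f x ^ (p - 1)) ^ r := by rw [← ENNReal.rpow_mul, hrr]
          _ ≤ (A * Mmu (volume.withDensity w) h x) ^ r := by gcongr
          _ = _ := ENNReal.mul_rpow_of_nonneg _ _ (by linarith)
    _ = A ^ r * ∫⁻ x, Mmu (volume.withDensity w) h x ^ r ∂(volume.withDensity w) := by
        rw [lintegral_const_mul (f := fun x => Mmu (volume.withDensity w) h x ^ r * w x) _ (((Mmu_measurable _ _).pow_const _).mul hwm), wd _ _ hwm ((Mmu_measurable _ _).pow_const _)]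
    _ ≤ A ^ r * (C2 * ∫⁻ x, h x ^ r ∂(volume.withDensity w)) := by
        gcongr; exact H2 _ _ hhm
    _ = A ^ r * (C2 * ∫⁻ x, g x ^ p ∂(volume.withDensity σ)) := by
        rw [wd _ _ hwm (hhm.pow_const _), wd _ _ hσm (hgm.pow_const _)]
        congr 2
        refine lintegral_congr_ae ?_
        filter_upwards [hw, hrel] with x hx hx2
        simp only [hh]
        rw [ENNReal.mul_rpow_of_nonneg _ _ (by linarith), ← ENNReal.rpow_mul, hrr, hx2, mul_right_comm, mul_comm]
        congr 1
        rw [← ENNReal.rpow_neg_one, ← ENNReal.rpow_mul]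
        nth_rewrite 2 [← ENNReal.rpow_one (w x)]
        rw [← ENNReal.rpow_add _ _ hx.1 hx.2]
        congr 1
        rw [hr]; field_simp; ring
    _ ≤ A ^ r * (C2 * (C1 * ∫⁻ x, ((σ x)⁻¹ * f x) ^ p ∂(volume.withDensity σ))) := by
        gcongr; exact H1 _ _ (hσm.inv.mul hf)
    _ = A ^ r * (C2 * C1) * ∫⁻ x, f x ^ p * w x := by
        rw [mul_assoc, mul_assoc]
        congr 3
        rw [wd σ (fun x => ((σ x)⁻¹ * f x) ^ p) hσm ((hσm.inv.mul hf).pow_const _)]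
        refine lintegral_congr_ae ?_
        filter_upwards [hw, hrel] with x hx hx2
        rw [ENNReal.mul_rpow_of_nonneg _ _ (by linarith), mul_right_comm, mul_comm]
        congr 1
        rw [hx2, ← ENNReal.rpow_neg_one, ← ENNReal.rpow_mul, ← ENNReal.rpow_mul, ← ENNReal.rpow_add _ _ hx.1 hx.2]
        conv_rhs => rw [← ENNReal.rpow_one (w x)]
        congr 1
        field_simp; ring

lemma setLIntegral_Ioo_ne_zero (a b : ℚ) (h : a < b) (u : ℝ → ℝ≥0∞) (hm : Measurable u) (hu : ∀ᵐ x, u x ≠ 0) :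
    (∫⁻ x in Set.Ioo (a : ℝ) (b : ℝ), u x) ≠ 0 := by
  intro h0
  rw [lintegral_eq_zero_iff hm] at h0
  have h1 : ∀ᵐ x ∂(volume.restrict (Set.Ioo (a : ℝ) (b : ℝ))), False := by
    filter_upwards [h0, ae_restrict_of_ae hu] with x h1 h2
    exact h2 h1
  rw [ae_iff] at h1
  simp at h1
  have : (a : ℝ) < b := by exact_mod_cast h
  linarith

lemma A1_int {K : ℝ≥0∞} (hK : K ≠ ∞) {u : ℝ → ℝ≥0∞} (hu : A1 K u) (a b : ℚ) (h : a < b) :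
    (∫⁻ x in Set.Ioo (a : ℝ) (b : ℝ), u x) ≠ 0 ∧ (∫⁻ x in Set.Ioo (a : ℝ) (b : ℝ), u x) ≠ ∞ ∧
    ∀ᵐ x ∂(volume.restrict (Set.Ioo (a : ℝ) (b : ℝ))),
      (volume (Set.Ioo (a : ℝ) (b : ℝ)))⁻¹ * (∫⁻ x in Set.Ioo (a : ℝ) (b : ℝ), u x) ≤ K * u x := by
  have h3 : ∀ᵐ x ∂(volume.restrict (Set.Ioo (a : ℝ) (b : ℝ))),
      (volume (Set.Ioo (a : ℝ) (b : ℝ)))⁻¹ * (∫⁻ x in Set.Ioo (a : ℝ) (b : ℝ), u x) ≤ K * u x := by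
    filter_upwards [ae_restrict_of_ae hu.2, ae_restrict_mem measurableSet_Ioo] with x hx hxI
    exact (le_Mmu volume u x a b hxI).trans hx.2.2
  refine ⟨setLIntegral_Ioo_ne_zero a b h u hu.1 (hu.2.mono fun x hx => hx.1), ?_, h3⟩
  intro htop
  have hV0 := vol_Ioo_ne_zero a b h
  have : ∀ᵐ x ∂(volume.restrict (Set.Ioo (a : ℝ) (b : ℝ))), False := by
    filter_upwards [h3, ae_restrict_of_ae hu.2] with x h1 h2
    rw [htop, ENNReal.mul_top (ENNReal.inv_ne_zero.2 (vol_Ioo_ne_top _ _))] at h1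
    exact ENNReal.mul_ne_top hK h2.2.1 (top_le_iff.1 h1)
  rw [ae_iff] at this
  simp at this
  have : (a : ℝ) < b := by exact_mod_cast h
  linarith

lemma neg_rpow_le {c K u : ℝ≥0∞} {s : ℝ} (hs : 0 ≤ s) (h : c ≤ K * u) (c0 : c ≠ 0) (ct : c ≠ ∞) (u0 : u ≠ 0) (ut : u ≠ ∞) :
    u ^ (-s) ≤ K ^ s * c ^ (-s) := by
  have h1 : c ^ s ≤ K ^ s * u ^ s := by
    rw [← ENNReal.mul_rpow_of_nonneg _ _ hs]; gcongr
  have hc : c ^ s * c ^ (-s) = 1 := by rw [← ENNReal.rpow_add _ _ c0 ct]; simp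
  have hu : u ^ s * u ^ (-s) = 1 := by rw [← ENNReal.rpow_add _ _ u0 ut]; simp
  calc u ^ (-s) = u ^ (-s) * (c ^ s * c ^ (-s)) := by rw [hc, mul_one]
    _ ≤ u ^ (-s) * ((K ^ s * u ^ s) * c ^ (-s)) := by gcongr
    _ = K ^ s * c ^ (-s) * (u ^ s * u ^ (-s)) := by ring
    _ = _ := by rw [hu, mul_one]

lemma ne0_rpow {x : ℝ≥0∞} (h0 : x ≠ 0) (ht : x ≠ ∞) (s : ℝ) : x ^ s ≠ 0 :=
  (ENNReal.rpow_pos (pos_iff_ne_zero.2 h0) ht).ne'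

lemma net_rpow {x : ℝ≥0∞} (h0 : x ≠ 0) (ht : x ≠ ∞) (s : ℝ) : x ^ s ≠ ∞ :=
  ENNReal.rpow_ne_top_of_ne_zero h0 ht

lemma half_ap {K : ℝ≥0∞} (hK : K ≠ ∞) {u v : ℝ → ℝ≥0∞} (hu : A1 K u) (hv : A1 K v) (s : ℝ) (hs : 0 ≤ s)
    (a b : ℚ) (h : a < b) :
    (∫⁻ x in Set.Ioo (a : ℝ) (b : ℝ), u x ^ (-s) * v x) ≠ 0 ∧ (∫⁻ x in Set.Ioo (a : ℝ) (b : ℝ), u x ^ (-s) * v x) ≠ ∞ ∧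
    (∫⁻ x in Set.Ioo (a : ℝ) (b : ℝ), u x ^ (-s) * v x) ≤
      K ^ s * ((volume (Set.Ioo (a : ℝ) (b : ℝ)))⁻¹ * (∫⁻ x in Set.Ioo (a : ℝ) (b : ℝ), u x)) ^ (-s) *
        ∫⁻ x in Set.Ioo (a : ℝ) (b : ℝ), v x := by
  obtain ⟨u0, ut, hu3⟩ := A1_int hK hu a b h
  obtain ⟨v0, vt, hv3⟩ := A1_int hK hv a b h
  have hV0 := vol_Ioo_ne_zero a b h
  have hVt := vol_Ioo_ne_top a b
  set I := Set.Ioo (a : ℝ) (b : ℝ) with hI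
  set c := (volume I)⁻¹ * ∫⁻ x in I, u x with hc
  have c0 : c ≠ 0 := mul_ne_zero (ENNReal.inv_ne_zero.2 hVt) u0
  have ct : c ≠ ∞ := ENNReal.mul_ne_top (ENNReal.inv_ne_top.2 hV0) ut
  have hle : (∫⁻ x in I, u x ^ (-s) * v x) ≤ K ^ s * c ^ (-s) * ∫⁻ x in I, v x := by
    rw [← lintegral_const_mul _ hv.1]
    refine lintegral_mono_ae ?_
    filter_upwards [hu3, ae_restrict_of_ae hu.2] with x h1 h2
    gcongr
    exact neg_rpow_le hs h1 c0 ct h2.1 h2.2.1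
  refine ⟨?_, ?_, hle⟩
  · refine setLIntegral_Ioo_ne_zero a b h _ ((hu.1.pow_const _).mul hv.1) ?_
    filter_upwards [hu.2, hv.2] with x h1 h2
    exact mul_ne_zero (ne0_rpow h1.1 h1.2.1 _) h2.1
  · refine ne_top_of_le_ne_top ?_ hle
    exact ENNReal.mul_ne_top (ENNReal.mul_ne_top (ENNReal.rpow_ne_top_of_nonneg hs hK) (net_rpow c0 ct _)) vt

lemma ap_fact (p : ℝ) (hp : 1 < p) {K : ℝ≥0∞} (hK : K ≠ ∞) {u v : ℝ → ℝ≥0∞} (hu : A1 K u) (hv : A1 K v) :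
    ApCond p (K ^ (p - 1) * K) (fun x => u x ^ (1 - p) * v x) (fun x => v x ^ (-(p - 1)⁻¹) * u x) := by
  intro a b h
  have hp1 : 0 < p - 1 := by linarith
  obtain ⟨w0, wt, hw⟩ := half_ap hK hu hv (p - 1) hp1.le a b h
  obtain ⟨s0, st, hs⟩ := half_ap hK hv hu (p - 1)⁻¹ (by positivity) a b h
  have e : -(p - 1) = 1 - p := by ring
  rw [e] at w0 wt hw
  refine ⟨w0, wt, s0, st, ?_⟩
  obtain ⟨u0, ut, -⟩ := A1_int hK hu a b h
  obtain ⟨v0, vt, -⟩ := A1_int hK hv a b h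
  have hV0 := vol_Ioo_ne_zero a b h
  have hVt := vol_Ioo_ne_top a b
  set I := Set.Ioo (a : ℝ) (b : ℝ) with hI
  set U := ∫⁻ x in I, u x
  set V := ∫⁻ x in I, v x
  set L := volume I
  have c0 : L⁻¹ * U ≠ 0 := mul_ne_zero (ENNReal.inv_ne_zero.2 hVt) u0
  have ct : L⁻¹ * U ≠ ∞ := ENNReal.mul_ne_top (ENNReal.inv_ne_top.2 hV0) ut
  have d0 : L⁻¹ * V ≠ 0 := mul_ne_zero (ENNReal.inv_ne_zero.2 hVt) v0
  have dt : L⁻¹ * V ≠ ∞ := ENNReal.mul_ne_top (ENNReal.inv_ne_top.2 hV0) vt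
  have hU : U = L * (L⁻¹ * U) := by rw [← mul_assoc, ENNReal.mul_inv_cancel hV0 hVt, one_mul]
  have hV : V = L * (L⁻¹ * V) := by rw [← mul_assoc, ENNReal.mul_inv_cancel hV0 hVt, one_mul]
  generalize L⁻¹ * U = c at *
  generalize L⁻¹ * V = d at *
  have hc : c ^ (1 - p) * c ^ (p - 1) = 1 := by rw [← ENNReal.rpow_add _ _ c0 ct]; simp
  have hd : d ^ (-1 : ℝ) * d = 1 := by
    rw [ENNReal.rpow_neg_one, ENNReal.inv_mul_cancel d0 dt]
  have hVp : L ^ p = L ^ (p - 1) * L := by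
    conv_lhs => rw [show p = (p - 1) + 1 by ring, ENNReal.rpow_add _ _ hV0 hVt, ENNReal.rpow_one]
  calc _ ≤ (K ^ (p - 1) * c ^ (1 - p) * V) * (K ^ (p - 1)⁻¹ * d ^ (-(p - 1)⁻¹) * U) ^ (p - 1) := by gcongr
    _ = (K ^ (p - 1) * c ^ (1 - p) * (L * d)) * (K * d ^ (-1 : ℝ) * (L ^ (p - 1) * c ^ (p - 1))) := by
        rw [ENNReal.mul_rpow_of_nonneg _ _ hp1.le, ENNReal.mul_rpow_of_nonneg _ _ hp1.le, ← ENNReal.rpow_mul, ← ENNReal.rpow_mul]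
        rw [show (p - 1)⁻¹ * (p - 1) = 1 by field_simp, show -(p - 1)⁻¹ * (p - 1) = -1 by field_simp, ENNReal.rpow_one, hV]
        conv_lhs => rw [hU]
        rw [ENNReal.mul_rpow_of_nonneg _ _ hp1.le]
    _ = K ^ (p - 1) * K * (L ^ (p - 1) * L) * (c ^ (1 - p) * c ^ (p - 1)) * (d ^ (-1 : ℝ) * d) := by ring
    _ = _ := by rw [hc, hd, hVp, mul_one, mul_one]

theorem muck (p : ℝ) (hp : 1 < p) (K : ℝ≥0∞) (hK : K ≠ ∞) : ∃ N : ℝ≥0∞, N ≠ ∞ ∧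
    ∀ (u v : ℝ → ℝ≥0∞), A1 K u → A1 K v → ∀ (f : ℝ → ℝ≥0∞), Measurable f →
    ∫⁻ x, Mx f x ^ p * (u x ^ (1 - p) * v x) ≤ N * ∫⁻ x, f x ^ p * (u x ^ (1 - p) * v x) := by
  have hp1 : 0 < p - 1 := by linarith
  obtain ⟨N, hN, H⟩ := muck0 p hp (K ^ (p - 1) * K) (ENNReal.mul_ne_top (ENNReal.rpow_ne_top_of_nonneg hp1.le hK) hK)
  refine ⟨N, hN, fun u v hu hv f hf => ?_⟩
  refine H (fun x => u x ^ (1 - p) * v x) (fun x => v x ^ (-(p - 1)⁻¹) * u x) ((hu.1.pow_const _).mul hv.1) ((hv.1.pow_const _).mul hu.1) ?_ ?_ (ap_fact p hp hK hu hv) ?_ f hf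
  · filter_upwards [hu.2, hv.2] with x h1 h2
    exact ⟨mul_ne_zero (ne0_rpow h1.1 h1.2.1 _) h2.1, ENNReal.mul_ne_top (net_rpow h1.1 h1.2.1 _) h2.2.1⟩
  · filter_upwards [hu.2, hv.2] with x h1 h2
    exact ⟨mul_ne_zero (ne0_rpow h2.1 h2.2.1 _) h1.1, ENNReal.mul_ne_top (net_rpow h2.1 h2.2.1 _) h1.2.1⟩
  · filter_upwards [hu.2, hv.2] with x h1 h2
    rw [ENNReal.mul_rpow_of_ne_zero (ne0_rpow h1.1 h1.2.1 _) h2.1, ← ENNReal.rpow_mul,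
      show (1 - p) * -(p - 1)⁻¹ = 1 by field_simp; ring, ENNReal.rpow_one, mul_comm]

lemma tsum_weighted_rpow_le {ι : Type*} (θ b : ι → ℝ≥0∞) (p : ℝ) (hp : 0 < p) :
    (∑' i, θ i * b i) ^ p ≤ (∑' i, θ i) ^ p * ∑' i, b i ^ p := by
  have h1 : ∀ i, b i ≤ (∑' i, b i ^ p) ^ p⁻¹ := fun i => by
    rw [ENNReal.le_rpow_inv_iff hp]
    exact ENNReal.le_tsum (f := fun i => b i ^ p) i
  calc (∑' i, θ i * b i) ^ p ≤ (∑' i, θ i * (∑' i, b i ^ p) ^ p⁻¹) ^ p := by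
        gcongr with i
        exact h1 i
    _ = _ := by
        rw [ENNReal.tsum_mul_right, ENNReal.mul_rpow_of_nonneg _ _ hp.le, ENNReal.rpow_inv_rpow hp.ne']

lemma Mx_measurable (f : ℝ → ℝ≥0∞) : Measurable (Mx f) := Mmu_measurable _ _

lemma Mx_mono {f g : ℝ → ℝ≥0∞} (h : ∀ x, f x ≤ g x) (x : ℝ) : Mx f x ≤ Mx g x := by
  unfold Mx Mmu
  gcongr with ab hx y
  exact h y

lemma Mx_tsum_le {ι : Type*} [Countable ι] (f : ι → ℝ → ℝ≥0∞) (hf : ∀ i, Measurable (f i)) (x : ℝ) :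
    Mx (fun y => ∑' i, f i y) x ≤ ∑' i, Mx (f i) x := by
  refine iSup₂_le fun ab hx => ?_
  rw [lintegral_tsum (fun i => (hf i).aemeasurable), ← ENNReal.tsum_mul_left]
  refine ENNReal.tsum_le_tsum fun i => ?_
  exact le_Mmu volume (f i) x ab.1 ab.2 hx

lemma Mx_const_mul_le (c : ℝ≥0∞) (f : ℝ → ℝ≥0∞) (hf : Measurable f) (x : ℝ) :
    Mx (fun y => c * f y) x ≤ c * Mx f x := by
  refine iSup₂_le fun ab hx => ?_
  rw [lintegral_const_mul _ hf, mul_left_comm]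
  gcongr
  exact le_Mmu volume f x ab.1 ab.2 hx

lemma Mx_ne_zero (f : ℝ → ℝ≥0∞) (hf : Measurable f) (h : ¬ (∀ᵐ x, f x = 0)) (x : ℝ) : Mx f x ≠ 0 := by
  intro h0
  apply h
  have : ∀ᵐ y, ∀ ab : ℚ × ℚ, x ∈ Set.Ioo (ab.1 : ℝ) (ab.2 : ℝ) → y ∈ Set.Ioo (ab.1 : ℝ) (ab.2 : ℝ) → f y = 0 := by
    rw [ae_all_iff]
    intro ab
    by_cases hx : x ∈ Set.Ioo (ab.1 : ℝ) (ab.2 : ℝ)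
    · have h1 := le_Mmu volume f x ab.1 ab.2 hx
      rw [show Mmu volume f x = 0 from h0, nonpos_iff_eq_zero, mul_eq_zero] at h1
      rcases h1 with h1 | h1
      · exact absurd (ENNReal.inv_eq_zero.1 h1) (vol_Ioo_ne_top _ _)
      · rw [lintegral_eq_zero_iff hf, EventuallyEq, ae_restrict_iff' measurableSet_Ioo] at h1
        filter_upwards [h1] with y hy _ hyI
        exact hy hyI
    · exact Eventually.of_forall fun y hh => absurd hh hx
  filter_upwards [this] with y hy
  obtain ⟨a, ha⟩ := exists_rat_lt (min x y)
  obtain ⟨b, hb⟩ := exists_rat_gt (max x y)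
  have h1 := lt_min_iff.1 ha
  have h2 := max_lt_iff.1 hb
  exact hy (a, b) ⟨h1.1, h2.1⟩ ⟨h1.2, h2.2⟩

lemma rubio (p : ℝ) (hp : 1 < p) (N : ℝ≥0∞) (hN : N ≠ ∞) : ∃ c D : ℝ≥0∞, c ≠ ∞ ∧ D ≠ ∞ ∧
    ∀ w : ℝ → ℝ≥0∞, Measurable w → (∀ᵐ x, w x ≠ 0) →
    (∀ f : ℝ → ℝ≥0∞, Measurable f → ∫⁻ x, Mx f x ^ p * w x ≤ N * ∫⁻ x, f x ^ p * w x) →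
    ∀ h : ℝ → ℝ≥0∞, Measurable h → (¬ ∀ᵐ x, h x = 0) → ∫⁻ x, h x ^ p * w x ≠ ∞ →
    ∃ H : ℝ → ℝ≥0∞, A1 c H ∧ (∀ x, h x ≤ H x) ∧ ∫⁻ x, H x ^ p * w x ≤ D * ∫⁻ x, h x ^ p * w x := by
  set B := max 1 N with hB
  have hB1 : 1 ≤ B := le_max_left _ _
  have hBt : B ≠ ∞ := by simp [hB, hN]
  have hB0 : B ≠ 0 := (zero_lt_one.trans_le hB1).ne'
  have hNB : N ≤ B ^ p := (le_max_right _ _).trans (by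
    calc B = B ^ (1 : ℝ) := (ENNReal.rpow_one _).symm
      _ ≤ B ^ p := ENNReal.rpow_le_rpow_of_exponent_le hB1 hp.le)
  have hp0 : 0 < p := by linarith
  set e : ℝ≥0∞ := 2⁻¹ * (2 * B)⁻¹ with he
  have h2B0 : 2 * B ≠ 0 := mul_ne_zero two_ne_zero hB0
  have h2Bt : 2 * B ≠ ∞ := ENNReal.mul_ne_top ENNReal.ofNat_ne_top hBt
  have he0 : e ≠ 0 := mul_ne_zero (by simp) (ENNReal.inv_ne_zero.2 h2Bt)
  have het : e ≠ ∞ := ENNReal.mul_ne_top (by simp) (ENNReal.inv_ne_top.2 h2B0)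
  refine ⟨e⁻¹, 2 ^ p * 2, ENNReal.inv_ne_top.2 he0, ENNReal.mul_ne_top (two_rpow_ne_top _) (by norm_num), ?_⟩
  intro w hw hw0 hM h hh hh0 hht
  set m : ℕ → ℝ → ℝ≥0∞ := fun k => Mx^[k] h with hm
  have m0 : m 0 = h := rfl
  have ms : ∀ k, m (k + 1) = Mx (m k) := fun k => Function.iterate_succ_apply' _ _ _
  have mm : ∀ k, Measurable (m k) := by
    intro k
    cases k with
    | zero => exact hh
    | succ k => rw [ms]; exact Mx_measurable _
  have mi : ∀ k, ∫⁻ x, m k x ^ p * w x ≤ (B ^ p) ^ k * ∫⁻ x, h x ^ p * w x := by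
    intro k
    induction k with
    | zero => simp [m0]
    | succ k ih =>
      rw [ms]
      calc _ ≤ N * ∫⁻ x, m k x ^ p * w x := hM _ (mm k)
        _ ≤ B ^ p * ((B ^ p) ^ k * ∫⁻ x, h x ^ p * w x) := by gcongr
        _ = _ := by ring
  set H : ℝ → ℝ≥0∞ := fun x => ∑' k, e ^ k * m k x with hH
  have hHm : Measurable H := Measurable.tsum fun k => (mm k).const_mul _
  have hint : ∫⁻ x, H x ^ p * w x ≤ 2 ^ p * 2 * ∫⁻ x, h x ^ p * w x := by
    calc ∫⁻ x, H x ^ p * w x ≤ ∫⁻ x, ∑' k : ℕ, 2 ^ p * ((((2 * B)⁻¹) ^ k * m k x) ^ p * w x) := by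
          refine lintegral_mono fun x => ?_
          simp only
          rw [ENNReal.tsum_mul_left, ENNReal.tsum_mul_right, ← mul_assoc]
          gcongr
          have := tsum_weighted_rpow_le (fun k : ℕ => (2⁻¹ : ℝ≥0∞) ^ k) (fun k => ((2 * B)⁻¹) ^ k * m k x) p hp0
          rw [ENNReal.tsum_geometric, ENNReal.one_sub_inv_two, inv_inv] at this
          refine le_trans (le_of_eq ?_) this
          simp only [hH, he]
          congr 2; funext k; rw [mul_pow, mul_assoc]
      _ = ∑' k : ℕ, 2 ^ p * (((((2 * B)⁻¹) ^ k) ^ p) * ∫⁻ x, m k x ^ p * w x) := by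
          rw [lintegral_tsum]
          · congr 1; funext k
            rw [lintegral_const_mul (f := fun x => ((((2 * B)⁻¹) ^ k * m k x) ^ p * w x)) _
              ((((mm k).const_mul _).pow_const _).mul hw),
              ← lintegral_const_mul (f := fun x => m k x ^ p * w x) _ (((mm k).pow_const _).mul hw)]
            congr 2; funext x
            rw [ENNReal.mul_rpow_of_nonneg _ _ hp0.le, mul_assoc]
          · intro k
            exact (((((mm k).const_mul _).pow_const _).mul hw).const_mul _).aemeasurable
      _ ≤ ∑' k : ℕ, 2 ^ p * ((2⁻¹ : ℝ≥0∞) ^ k * ∫⁻ x, h x ^ p * w x) := by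
          refine ENNReal.tsum_le_tsum fun k => ?_
          refine mul_le_mul_right ?_ _
          calc _ ≤ ((((2 * B)⁻¹) ^ k) ^ p) * ((B ^ p) ^ k * ∫⁻ x, h x ^ p * w x) := mul_le_mul_right (mi k) _
            _ = ((((2 * B)⁻¹) ^ k) ^ p) * ((B ^ p) ^ k) * ∫⁻ x, h x ^ p * w x := by ring
            _ ≤ _ := by
              refine mul_le_mul_left ?_ _
              have e1 : (((2 * B)⁻¹) ^ k) ^ p = (((2 * B)⁻¹) ^ p) ^ k := by
                rw [← ENNReal.rpow_natCast, ← ENNReal.rpow_natCast, ← ENNReal.rpow_mul, ← ENNReal.rpow_mul, mul_comm (k : ℝ) p]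
              rw [e1, ← mul_pow, ← ENNReal.mul_rpow_of_nonneg _ _ hp0.le]
              gcongr
              rw [ENNReal.mul_inv (by simp) (by simp), mul_assoc, ENNReal.inv_mul_cancel hB0 hBt, mul_one]
              calc (2⁻¹ : ℝ≥0∞) ^ p ≤ 2⁻¹ ^ (1 : ℝ) := ENNReal.rpow_le_rpow_of_exponent_ge (by norm_num) hp.le
                _ = _ := ENNReal.rpow_one _
      _ = _ := by
          rw [ENNReal.tsum_mul_left, ENNReal.tsum_mul_right, ENNReal.tsum_geometric, ENNReal.one_sub_inv_two, inv_inv, mul_assoc]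
  refine ⟨H, ⟨hHm, ?_⟩, ?_, hint⟩
  · have hfin : ∀ᵐ x, H x ^ p * w x < ∞ := by
      refine ae_lt_top ((hHm.pow_const _).mul hw) ?_
      exact ne_top_of_le_ne_top (ENNReal.mul_ne_top (ENNReal.mul_ne_top (two_rpow_ne_top _) (by norm_num)) hht) hint
    filter_upwards [hfin, hw0] with x hx hx0
    refine ⟨?_, ?_, ?_⟩
    · have : e ^ 1 * m 1 x ≤ H x := ENNReal.le_tsum (f := fun k => e ^ k * m k x) 1
      have h2 : e ^ 1 * m 1 x ≠ 0 := by
        rw [ms, m0]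
        exact mul_ne_zero (pow_ne_zero _ he0) (Mx_ne_zero h hh hh0 x)
      exact ((pos_iff_ne_zero.2 h2).trans_le this).ne'
    · intro ht
      rw [ht, ENNReal.top_rpow_of_pos hp0, ENNReal.top_mul hx0] at hx
      exact lt_irrefl _ hx
    · calc Mx H x ≤ ∑' k, Mx (fun y => e ^ k * m k y) x := Mx_tsum_le _ (fun k => (mm k).const_mul _) x
        _ ≤ ∑' k, e⁻¹ * (e ^ (k + 1) * m (k + 1) x) := by
            refine ENNReal.tsum_le_tsum fun k => ?_
            refine (Mx_const_mul_le _ _ (mm k) x).trans (le_of_eq ?_)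
            rw [ms, pow_succ', ← mul_assoc, ← mul_assoc, ENNReal.inv_mul_cancel he0 het, one_mul]
        _ = e⁻¹ * ∑' k, (e ^ (k + 1) * m (k + 1) x) := ENNReal.tsum_mul_left
        _ ≤ e⁻¹ * H x := by
            gcongr
            exact ENNReal.tsum_comp_le_tsum_of_injective Nat.succ_injective (fun k => e ^ k * m k x)
  · intro x
    have : e ^ 0 * m 0 x ≤ H x := ENNReal.le_tsum (f := fun k => e ^ k * m k x) 0
    simpa [m0] using this

/-- weighted boundedness of a family of pairs. -/
def WB (𝓕 : Set ((ℝ → ℝ≥0∞) × (ℝ → ℝ≥0∞))) (r : ℝ) : Prop :=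
  ∀ K : ℝ≥0∞, K ≠ ∞ → ∃ N : ℝ≥0∞, N ≠ ∞ ∧ ∀ u v, A1 K u → A1 K v → ∀ P ∈ 𝓕,
    ∫⁻ x, P.2 x ^ r * (u x ^ (1 - r) * v x) ≤ N * ∫⁻ x, P.1 x ^ r * (u x ^ (1 - r) * v x)

lemma A1.mono {K K' : ℝ≥0∞} (h : K ≤ K') {u : ℝ → ℝ≥0∞} (hu : A1 K u) : A1 K' u := by
  refine ⟨hu.1, hu.2.mono fun x hx => ⟨hx.1, hx.2.1, hx.2.2.trans ?_⟩⟩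
  gcongr

lemma conj_of {r : ℝ} (hr : 1 < r) : r.HolderConjugate (r * (r - 1)⁻¹) := by
  have := Real.HolderConjugate.conjExponent hr
  rwa [Real.conjExponent, div_eq_mul_inv] at this

lemma extrap_holder1 (r : ℝ) (hr : 1 < r) (N : ℝ≥0∞) (F G U V : ℝ → ℝ≥0∞) (hF : Measurable F) (hG : Measurable G)
    (hU : Measurable U) (hV : Measurable V) (hU0 : ∀ᵐ x, U x ≠ 0 ∧ U x ≠ ∞) (hV0 : ∀ᵐ x, V x ≠ 0 ∧ V x ≠ ∞)
    (hFU : ∀ x, F x ≤ U x)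
    (h : ∫⁻ x, G x ^ r * (U x ^ (1 - r) * V x) ≤ N * ∫⁻ x, F x ^ r * (U x ^ (1 - r) * V x)) :
    ∫⁻ x, G x * V x ≤ N ^ r⁻¹ * ∫⁻ x, U x * V x := by
  have hr0 : 0 < r := by linarith
  have hr1 : 0 < r - 1 := by linarith
  set r' := r * (r - 1)⁻¹ with hr'
  have hr'0 : 0 < r' := by positivity
  have hinv : r'⁻¹ = (r - 1) * r⁻¹ := by rw [hr']; field_simp
  set f : ℝ → ℝ≥0∞ := fun x => G x * (U x ^ ((1 - r) * r⁻¹) * V x ^ r⁻¹) with hf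
  set g : ℝ → ℝ≥0∞ := fun x => (U x * V x) ^ r'⁻¹ with hg
  have hfm : Measurable f := hG.mul ((hU.pow_const _).mul (hV.pow_const _))
  have hgm : Measurable g := (hU.mul hV).pow_const _
  have H := ENNReal.lintegral_mul_le_Lp_mul_Lq volume (conj_of hr) hfm.aemeasurable hgm.aemeasurable
  rw [← hr'] at H
  have e0 : ∫⁻ x, G x * V x = ∫⁻ x, (f * g) x := by
    refine lintegral_congr_ae ?_
    filter_upwards [hU0, hV0] with x hu hv
    simp only [Pi.mul_apply, hf, hg]
    rw [ENNReal.mul_rpow_of_nonneg _ _ (by positivity)]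
    have a1 : U x ^ ((1 - r) * r⁻¹) * U x ^ r'⁻¹ = 1 := by
      rw [← ENNReal.rpow_add _ _ hu.1 hu.2, hinv, show (1 - r) * r⁻¹ + (r - 1) * r⁻¹ = 0 by ring, ENNReal.rpow_zero]
    have a2 : V x ^ r⁻¹ * V x ^ r'⁻¹ = V x := by
      rw [← ENNReal.rpow_add _ _ hv.1 hv.2, hinv, show r⁻¹ + (r - 1) * r⁻¹ = 1 by field_simp; ring, ENNReal.rpow_one]
    calc G x * V x = G x * (U x ^ ((1 - r) * r⁻¹) * U x ^ r'⁻¹) * (V x ^ r⁻¹ * V x ^ r'⁻¹) := by rw [a1, a2, mul_one]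
      _ = _ := by ring
  have e1 : ∫⁻ x, f x ^ r = ∫⁻ x, G x ^ r * (U x ^ (1 - r) * V x) := by
    congr 1; funext x
    simp only [hf]
    rw [ENNReal.mul_rpow_of_nonneg _ _ hr0.le, ENNReal.mul_rpow_of_nonneg _ _ hr0.le, ← ENNReal.rpow_mul, ← ENNReal.rpow_mul,
      show (1 - r) * r⁻¹ * r = 1 - r by field_simp, show r⁻¹ * r = 1 by field_simp, ENNReal.rpow_one]
  have e2 : ∫⁻ x, g x ^ r' = ∫⁻ x, U x * V x := by
    congr 1; funext x
    simp only [hg]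
    rw [ENNReal.rpow_inv_rpow hr'0.ne']
  have e3 : ∫⁻ x, F x ^ r * (U x ^ (1 - r) * V x) ≤ ∫⁻ x, U x * V x := by
    refine lintegral_mono_ae ?_
    filter_upwards [hU0] with x hu
    rw [← mul_assoc]
    refine mul_le_mul_left ?_ _
    calc F x ^ r * U x ^ (1 - r) ≤ U x ^ r * U x ^ (1 - r) := by gcongr; exact hFU x
      _ = U x := by rw [← ENNReal.rpow_add _ _ hu.1 hu.2]; simp
  rw [e0]
  refine H.trans ?_
  rw [e1, e2, one_div, one_div]
  calc _ ≤ (N * ∫⁻ x, U x * V x) ^ r⁻¹ * (∫⁻ x, U x * V x) ^ r'⁻¹ := by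
        gcongr
        exact h.trans (by gcongr)
    _ = N ^ r⁻¹ * (∫⁻ x, U x * V x) := by
        rw [ENNReal.mul_rpow_of_nonneg _ _ (by positivity), mul_assoc, ← ENNReal.rpow_add_of_nonneg _ _ (by positivity) (by positivity),
          hinv, show r⁻¹ + (r - 1) * r⁻¹ = 1 by field_simp; ring, ENNReal.rpow_one]

lemma extrap_holder2 (s : ℝ) (hs : 1 < s) (U V w σ : ℝ → ℝ≥0∞) (hU : Measurable U) (hV : Measurable V)
    (hw : Measurable w) (hw0 : ∀ᵐ x, w x ≠ 0 ∧ w x ≠ ∞)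
    (hσ : ∀ᵐ x, σ x = w x ^ (-(s - 1)⁻¹)) :
    ∫⁻ x, U x * V x ≤ (∫⁻ x, U x ^ s * w x) ^ s⁻¹ * (∫⁻ x, V x ^ (s * (s - 1)⁻¹) * σ x) ^ (s * (s - 1)⁻¹)⁻¹ := by
  have hs0 : 0 < s := by linarith
  have hs1 : 0 < s - 1 := by linarith
  have H := ENNReal.lintegral_mul_le_Lp_mul_Lq volume (conj_of hs)
    (f := fun x => U x * w x ^ s⁻¹) (g := fun x => V x * w x ^ (-s⁻¹))
    (hU.mul (hw.pow_const _)).aemeasurable (hV.mul (hw.pow_const _)).aemeasurable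
  have e0 : ∫⁻ x, U x * V x = ∫⁻ x, ((fun x => U x * w x ^ s⁻¹) * (fun x => V x * w x ^ (-s⁻¹))) x := by
    refine lintegral_congr_ae ?_
    filter_upwards [hw0] with x h
    simp only [Pi.mul_apply]
    have : w x ^ s⁻¹ * w x ^ (-s⁻¹) = 1 := by rw [← ENNReal.rpow_add _ _ h.1 h.2]; simp
    calc U x * V x = U x * V x * (w x ^ s⁻¹ * w x ^ (-s⁻¹)) := by rw [this, mul_one]
      _ = _ := by ring
  rw [e0]
  refine H.trans (le_of_eq ?_)
  rw [one_div, one_div]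
  congr 2
  · congr 1; funext x
    rw [ENNReal.mul_rpow_of_nonneg _ _ hs0.le, ENNReal.rpow_inv_rpow hs0.ne']
  · refine lintegral_congr_ae ?_
    filter_upwards [hσ] with x h
    rw [ENNReal.mul_rpow_of_nonneg _ _ (by positivity), h, ← ENNReal.rpow_mul]
    congr 2
    field_simp

theorem extrap (𝓕 : Set ((ℝ → ℝ≥0∞) × (ℝ → ℝ≥0∞))) (hm : ∀ P ∈ 𝓕, Measurable P.1 ∧ Measurable P.2)
    (r s : ℝ) (hr : 1 < r) (hs : 1 < s) (h : WB 𝓕 r) : WB 𝓕 s := by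
  intro K hK
  have hs0 : 0 < s := by linarith
  have hs1 : 0 < s - 1 := by linarith
  set s' := s * (s - 1)⁻¹ with hs'
  have hs'1 : 1 < s' := by
    rw [hs', ← div_eq_mul_inv, lt_div_iff₀ hs1]; linarith
  have hs'0 : 0 < s' := by linarith
  have e1s' : 1 - s' = -(s - 1)⁻¹ := by rw [hs']; field_simp; ring
  obtain ⟨B1, hB1, H1⟩ := muck s hs K hK
  obtain ⟨B2, hB2, H2⟩ := muck s' hs'1 K hK
  obtain ⟨c1, D1, hc1, hD1, R1⟩ := rubio s hs B1 hB1
  obtain ⟨c2, D2, hc2, hD2, R2⟩ := rubio s' hs'1 B2 hB2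
  obtain ⟨N, hN, HN⟩ := h (max c1 c2) (by simp [hc1, hc2])
  obtain ⟨N0, hN0, HN0⟩ := h K hK
  set T := N ^ r⁻¹ * (D1 ^ s⁻¹ * D2 ^ s'⁻¹) with hT
  have hTt : T ≠ ∞ := by
    refine ENNReal.mul_ne_top (ENNReal.rpow_ne_top_of_nonneg (by positivity) hN) (ENNReal.mul_ne_top (ENNReal.rpow_ne_top_of_nonneg (by positivity) hD1) (ENNReal.rpow_ne_top_of_nonneg (by positivity) hD2))
  refine ⟨max 1 (T ^ s), by simp [ENNReal.rpow_ne_top_of_nonneg hs0.le hTt], ?_⟩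
  intro u v hu hv P hP
  obtain ⟨hFm, hGm⟩ := hm P hP
  have hwm : Measurable fun x => u x ^ (1 - s) * v x := (hu.1.pow_const _).mul hv.1
  have hσm : Measurable fun x => v x ^ (1 - s') * u x := (hv.1.pow_const _).mul hu.1
  have hw0 : ∀ᵐ x, u x ^ (1 - s) * v x ≠ 0 ∧ u x ^ (1 - s) * v x ≠ ∞ := by
    filter_upwards [hu.2, hv.2] with x h1 h2
    exact ⟨mul_ne_zero (ne0_rpow h1.1 h1.2.1 _) h2.1, ENNReal.mul_ne_top (net_rpow h1.1 h1.2.1 _) h2.2.1⟩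
  have hσ0 : ∀ᵐ x, v x ^ (1 - s') * u x ≠ 0 := by
    filter_upwards [hu.2, hv.2] with x h1 h2
    exact mul_ne_zero (ne0_rpow h2.1 h2.2.1 _) h1.1
  have hrel : ∀ᵐ x, v x ^ (1 - s') * u x = (u x ^ (1 - s) * v x) ^ (-(s - 1)⁻¹) := by
    filter_upwards [hu.2, hv.2] with x h1 h2
    rw [ENNReal.mul_rpow_of_ne_zero (ne0_rpow h1.1 h1.2.1 _) h2.1, ← ENNReal.rpow_mul,
      show (1 - s) * -(s - 1)⁻¹ = 1 by field_simp; ring, ENNReal.rpow_one, mul_comm, e1s']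
  have H1' := H1 u v hu hv
  have H2' := H2 v u hv hu
  set w : ℝ → ℝ≥0∞ := fun x => u x ^ (1 - s) * v x with hw
  set σ : ℝ → ℝ≥0∞ := fun x => v x ^ (1 - s') * u x with hσ
  change ∫⁻ x, P.2 x ^ s * w x ≤ max 1 (T ^ s) * ∫⁻ x, P.1 x ^ s * w x
  set F := P.1
  set G := P.2
  set Φ := ∫⁻ x, F x ^ s * w x with hΦ
  by_cases hΦt : Φ = ∞
  · rw [hΦt, ENNReal.mul_top (by simp)]; exact le_top
  by_cases hF0 : ∀ᵐ x, F x = 0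
  · have h0 := HN0 u v hu hv P hP
    have hz : ∫⁻ x, F x ^ r * (u x ^ (1 - r) * v x) = 0 := by
      rw [lintegral_eq_zero_iff (f := fun x => F x ^ r * (u x ^ (1 - r) * v x)) ((hFm.pow_const _).mul ((hu.1.pow_const _).mul hv.1))]
      filter_upwards [hF0] with x hx
      simp [hx, show (0 : ℝ) < r by linarith]
    change ∫⁻ x, G x ^ r * (u x ^ (1 - r) * v x) ≤ N0 * ∫⁻ x, F x ^ r * (u x ^ (1 - r) * v x) at h0
    rw [hz, mul_zero, nonpos_iff_eq_zero, lintegral_eq_zero_iff (f := fun x => G x ^ r * (u x ^ (1 - r) * v x)) ((hGm.pow_const _).mul ((hu.1.pow_const _).mul hv.1))] at h0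
    have : ∫⁻ x, G x ^ s * w x = 0 := by
      rw [lintegral_eq_zero_iff (f := fun x => G x ^ s * w x) ((hGm.pow_const _).mul hwm)]
      filter_upwards [h0, hu.2, hv.2] with x hx h1 h2
      simp only [Pi.zero_apply, mul_eq_zero, ne0_rpow h1.1 h1.2.1, h2.1, or_false] at hx
      have : G x = 0 := (ENNReal.rpow_eq_zero_iff_of_pos (by linarith)).1 hx
      simp [this, hs0]
    rw [this]; exact zero_le
  obtain ⟨U, hUA, hFU, hUi⟩ := R1 w hwm (hw0.mono fun x hx => hx.1) H1' F hFm hF0 hΦt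
  -- core estimate
  have core : ∀ g : ℝ → ℝ≥0∞, Measurable g → (∀ x, g x ≤ G x) → ∫⁻ x, g x ^ s * w x ≠ ∞ →
      ∫⁻ x, g x ^ s * w x ≤ T ^ s * Φ := by
    intro g hg hgG hgt
    set Ψ := ∫⁻ x, g x ^ s * w x with hΨ
    set h2 : ℝ → ℝ≥0∞ := fun x => g x ^ (s - 1) * w x with hh2
    have hh2m : Measurable h2 := (hg.pow_const _).mul hwm
    have hgh : ∀ x, g x ^ s * w x = g x * h2 x := by
      intro x
      have e := ENNReal.rpow_add_of_nonneg (x := g x) 1 (s - 1) (by norm_num) hs1.le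
      rw [ENNReal.rpow_one, show 1 + (s - 1) = s by ring] at e
      change g x ^ s * w x = g x * (g x ^ (s - 1) * w x)
      rw [e, mul_assoc]
    by_cases hz : ∀ᵐ x, h2 x = 0
    · have : Ψ = 0 := by
        rw [hΨ, lintegral_eq_zero_iff (f := fun x => g x ^ s * w x) ((hg.pow_const _).mul hwm)]
        filter_upwards [hz] with x hx
        simp [hgh, hx]
      rw [this]; exact zero_le
    have hi : ∫⁻ x, h2 x ^ s' * σ x = Ψ := by
      refine lintegral_congr_ae ?_
      filter_upwards [hrel, hw0] with x hx h0
      have hx' : σ x = w x ^ (-(s - 1)⁻¹) := hx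
      rw [hx']
      simp only [hh2]
      rw [ENNReal.mul_rpow_of_nonneg _ _ hs'0.le, ← ENNReal.rpow_mul, mul_assoc, ← ENNReal.rpow_add _ _ h0.1 h0.2]
      rw [show (s - 1) * s' = s by rw [hs']; field_simp, show s' + -(s - 1)⁻¹ = 1 by rw [← e1s']; ring, ENNReal.rpow_one]
    obtain ⟨V, hVA, hhV, hVi⟩ := R2 σ hσm hσ0 H2' h2 hh2m hz (by rw [hi]; exact hgt)
    have a1 := extrap_holder1 r hr N F G U V hFm hGm hUA.1 hVA.1 (hUA.2.mono fun x hx => ⟨hx.1, hx.2.1⟩)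
      (hVA.2.mono fun x hx => ⟨hx.1, hx.2.1⟩) hFU (HN U V (hUA.mono (le_max_left _ _)) (hVA.mono (le_max_right _ _)) P hP)
    have a2 := extrap_holder2 s hs U V w σ hUA.1 hVA.1 hwm hw0 hrel
    rw [← hs'] at a2
    rw [hi] at hVi
    have a3 : Ψ ≤ T * Φ ^ s⁻¹ * Ψ ^ s'⁻¹ := by
      calc Ψ = ∫⁻ x, g x * h2 x := by rw [hΨ]; congr 1; funext x; exact hgh x
        _ ≤ ∫⁻ x, G x * V x := by
            gcongr with x
            · exact hgG x
            · exact hhV x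
        _ ≤ N ^ r⁻¹ * ((D1 * Φ) ^ s⁻¹ * (D2 * Ψ) ^ s'⁻¹) := by
            refine a1.trans ?_
            gcongr
            refine a2.trans ?_
            gcongr
        _ = _ := by
            rw [ENNReal.mul_rpow_of_nonneg _ _ (by positivity), ENNReal.mul_rpow_of_nonneg _ _ (by positivity), hT]
            ring
    by_cases hΨ0 : Ψ = 0
    · rw [hΨ0]; exact zero_le
    have hss : s⁻¹ + s'⁻¹ = 1 := by rw [hs']; field_simp; ring
    have a4 : Ψ ^ s⁻¹ * Ψ ^ s'⁻¹ ≤ T * Φ ^ s⁻¹ * Ψ ^ s'⁻¹ := by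
      rw [← ENNReal.rpow_add _ _ hΨ0 hgt, hss, ENNReal.rpow_one]; exact a3
    rw [ENNReal.mul_le_mul_iff_left (ne0_rpow hΨ0 hgt _) (net_rpow hΨ0 hgt _)] at a4
    calc Ψ = (Ψ ^ s⁻¹) ^ s := (ENNReal.rpow_inv_rpow hs0.ne' _).symm
      _ ≤ (T * Φ ^ s⁻¹) ^ s := by gcongr
      _ = T ^ s * Φ := by rw [ENNReal.mul_rpow_of_nonneg _ _ hs0.le, ENNReal.rpow_inv_rpow hs0.ne']
  -- truncation
  refine le_trans ?_ (mul_le_mul_left (le_max_right 1 (T ^ s)) _)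
  set E : ℕ → Set ℝ := fun n => Set.Icc (-(n : ℝ)) n ∩ {x | w x ≤ n} with hE
  have hEm : ∀ n, MeasurableSet (E n) := fun n => measurableSet_Icc.inter (measurableSet_le hwm measurable_const)
  set g : ℕ → ℝ → ℝ≥0∞ := fun n => (E n).indicator (fun x => min (G x) n) with hg
  have hgm : ∀ n, Measurable (g n) := fun n => (hGm.min measurable_const).indicator (hEm n)
  have hgG : ∀ n x, g n x ≤ G x := fun n x => by
    simp only [hg, Set.indicator_apply]
    split_ifs
    · exact min_le_left _ _
    · exact zero_le
  have hgt : ∀ n, ∫⁻ x, g n x ^ s * w x ≠ ∞ := by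
    intro n
    refine ne_top_of_le_ne_top (b := ∫⁻ x, (Set.Icc (-(n : ℝ)) n).indicator (fun _ => (n : ℝ≥0∞) ^ s * n) x) ?_ ?_
    · rw [lintegral_indicator_const measurableSet_Icc]
      refine ENNReal.mul_ne_top (ENNReal.mul_ne_top (ENNReal.rpow_ne_top_of_nonneg hs0.le (by simp)) (by simp)) ?_
      simp
    · refine lintegral_mono fun x => ?_
      by_cases hx : x ∈ E n
      · simp only [hg]
        rw [Set.indicator_of_mem hx, Set.indicator_of_mem hx.1]
        gcongr
        · exact min_le_right _ _
        · exact hx.2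
      · simp only [hg]
        rw [Set.indicator_of_notMem hx]; simp [hs0]
  have hmono : ∀ x, Monotone fun n => g n x := by
    intro x n k hnk
    have hnk' : (n : ℝ) ≤ k := by exact_mod_cast hnk
    have hnk'' : (n : ℝ≥0∞) ≤ k := by exact_mod_cast hnk
    simp only [hg]
    by_cases hx : x ∈ E n
    · have hx' : x ∈ E k := ⟨⟨by linarith [hx.1.1], by linarith [hx.1.2]⟩, le_trans hx.2 hnk''⟩
      rw [Set.indicator_of_mem hx, Set.indicator_of_mem hx']
      exact min_le_min_left _ hnk''
    · rw [Set.indicator_of_notMem hx]; exact zero_le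
  have hsup : ∀ᵐ x, G x ^ s * w x = ⨆ n, g n x ^ s * w x := by
    filter_upwards [hw0] with x hx
    apply le_antisymm
    · obtain ⟨n1, hn1⟩ := exists_nat_ge |x|
      obtain ⟨n2, hn2⟩ := ENNReal.exists_nat_gt hx.2
      have hk : ∀ k : ℕ, max n1 n2 ≤ k → g k x = min (G x) k := by
        intro k hk
        have k1 : (n1 : ℝ) ≤ k := by exact_mod_cast (le_max_left _ _).trans hk
        have k2 : (n2 : ℝ≥0∞) ≤ k := by exact_mod_cast (le_max_right _ _).trans hk
        have ha := abs_le.1 (hn1.trans k1)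
        simp only [hg]
        rw [Set.indicator_of_mem]
        exact ⟨ha, hn2.le.trans k2⟩
      have ht : Tendsto (fun k : ℕ => g k x ^ s * w x) atTop (nhds (G x ^ s * w x)) := by
        refine ENNReal.Tendsto.mul_const ?_ (Or.inr hx.2)
        refine (ENNReal.continuous_rpow_const.tendsto _).comp ?_
        have : Tendsto (fun k : ℕ => min (G x) (k : ℝ≥0∞)) atTop (nhds (min (G x) ∞)) :=
          tendsto_const_nhds.min ENNReal.tendsto_nat_nhds_top
        rw [min_top_right] at this
        refine this.congr' ?_
        filter_upwards [eventually_ge_atTop (max n1 n2)] with k hk'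
        exact (hk k hk').symm
      exact le_of_tendsto' ht fun k => le_iSup (fun n => g n x ^ s * w x) k
    · refine iSup_le fun n => ?_
      gcongr
      exact hgG n x
  rw [lintegral_congr_ae hsup, lintegral_iSup]
  · exact iSup_le fun n => core (g n) (hgm n) (hgG n) (hgt n)
  · intro n; exact ((hgm n).pow_const _).mul hwm
  · intro n k hnk x
    have := hmono x hnk
    simp only at this ⊢
    gcongr

/-- dyadic coefficient. -/
def cA (α : ℝ) (k : ℤ) : ℝ≥0∞ := ENNReal.ofReal ((2 : ℝ) ^ ((k : ℝ) * α))

/-- mixed norm with real exponents. -/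
def NE (n : ℕ) (α p q : Fin n → ℝ) (f : (Fin n → ℝ) → ℝ≥0∞) : ℝ≥0∞ :=
  mixedHerzNormE n α (fun i => ENNReal.ofReal (p i)) (fun i => ENNReal.ofReal (q i)) f

/-- Herz norm with real exponents. -/
def HN (α p q : ℝ) (g : ℝ → ℝ≥0∞) : ℝ≥0∞ :=
  (∑' k : ℤ, (cA α k * (∫⁻ x in herzRing k, g x ^ q) ^ q⁻¹) ^ p) ^ p⁻¹

lemma herz_eq (α p q : ℝ) (hp : 1 < p) (hq : 1 < q) (g : ℝ → ℝ≥0∞) :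
    herzNorm1 α (ENNReal.ofReal p) (ENNReal.ofReal q) g = HN α p q g := by
  simp only [herzNorm1, lpZNorm, lqNormOn, ENNReal.ofReal_ne_top, if_false, HN, cA, one_div]
  rw [ENNReal.toReal_ofReal (by linarith), ENNReal.toReal_ofReal (by linarith)]

lemma NE_succ (n : ℕ) (α p q : Fin (n + 1) → ℝ) (hp : ∀ i, 1 < p i) (hq : ∀ i, 1 < q i)
    (f : (Fin (n + 1) → ℝ) → ℝ≥0∞) :
    NE (n + 1) α p q f = HN (α (Fin.last n)) (p (Fin.last n)) (q (Fin.last n))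
      fun t => NE n (Fin.init α) (Fin.init p) (Fin.init q) fun y => f (Fin.snoc y t) := by
  rw [← herz_eq _ _ _ (hp _) (hq _)]
  rfl

lemma NE_zero (α p q : Fin 0 → ℝ) (f : (Fin 0 → ℝ) → ℝ≥0∞) (z : Fin 0 → ℝ) : NE 0 α p q f = f z := by
  change f _ = f z
  congr 1
  exact Subsingleton.elim _ _

lemma herzRing_meas (k : ℤ) : MeasurableSet (herzRing k) := measurableSet_Ioo.diff measurableSet_Ioo

lemma snoc_meas (n : ℕ) : Measurable fun z : (Fin n → ℝ) × ℝ => (Fin.snoc z.1 z.2 : Fin (n + 1) → ℝ) := by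
  rw [measurable_pi_iff]
  intro i
  refine Fin.lastCases ?_ (fun j => ?_) i
  · simp only [Fin.snoc_last]; exact measurable_snd
  · simp only [Fin.snoc_castSucc]; exact (measurable_pi_apply j).comp measurable_fst

lemma NE_meas (n : ℕ) : ∀ {γ : Type} [MeasurableSpace γ] (α p q : Fin n → ℝ) (_ : ∀ i, 1 < p i) (_ : ∀ i, 1 < q i)
    (f : γ → (Fin n → ℝ) → ℝ≥0∞), Measurable (Function.uncurry f) → Measurable fun c => NE n α p q (f c) := by
  induction n with
  | zero =>
    intro γ _ α p q hp hq f hf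
    have : (fun c => NE 0 α p q (f c)) = fun c => Function.uncurry f (c, fun i => i.elim0) := by
      funext c; exact NE_zero _ _ _ _ _
    rw [this]
    exact hf.comp (measurable_id.prodMk measurable_const)
  | succ n ih =>
    intro γ _ α p q hp hq f hf
    simp only [NE_succ n α p q hp hq, HN]
    refine Measurable.pow_const (Measurable.tsum fun k => ?_) _
    refine Measurable.pow_const (Measurable.const_mul (Measurable.pow_const ?_ _) _) _
    have h1 := ih (γ := γ × ℝ) (Fin.init α) (Fin.init p) (Fin.init q) (fun i => hp _) (fun i => hq _)
      (fun z y => f z.1 (Fin.snoc y z.2)) (by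
        refine hf.comp ((measurable_fst.comp measurable_fst).prodMk ?_)
        exact (snoc_meas n).comp (measurable_snd.prodMk (measurable_snd.comp measurable_fst)))
    exact Measurable.lintegral_prod_right' (h1.pow_const _)

lemma Mx2_meas {γ : Type} [MeasurableSpace γ] (f : ℝ → γ → ℝ≥0∞) (hf : Measurable (Function.uncurry f)) :
    Measurable fun z : ℝ × γ => Mx (fun s => f s z.2) z.1 := by
  unfold Mx Mmu
  refine Measurable.iSup fun ab => ?_
  have : (fun z : ℝ × γ => ⨆ (_ : z.1 ∈ Set.Ioo (ab.1 : ℝ) ab.2), (volume (Set.Ioo (ab.1 : ℝ) ab.2))⁻¹ * ∫⁻ y in Set.Ioo (ab.1 : ℝ) ab.2, f y z.2)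
      = (Prod.fst ⁻¹' Set.Ioo (ab.1 : ℝ) ab.2).indicator (fun z : ℝ × γ => (volume (Set.Ioo (ab.1 : ℝ) ab.2))⁻¹ * ∫⁻ y in Set.Ioo (ab.1 : ℝ) ab.2, f y z.2) := by
    funext z
    by_cases h : z.1 ∈ Set.Ioo (ab.1 : ℝ) ab.2
    · rw [Set.indicator_of_mem (by exact h), iSup_pos h]
    · rw [Set.indicator_of_notMem (by exact h), iSup_neg h]; rfl
  rw [this]
  refine Measurable.indicator ?_ (measurable_fst measurableSet_Ioo)
  refine Measurable.const_mul ?_ _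
  have : Measurable fun y : γ => ∫⁻ s in Set.Ioo (ab.1 : ℝ) ab.2, f s y := Measurable.lintegral_prod_left' hf
  exact this.comp measurable_snd

/-- the family of pairs. -/
def Fam (n : ℕ) (α p q : Fin n → ℝ) : Set ((ℝ → ℝ≥0∞) × (ℝ → ℝ≥0∞)) :=
  {P | ∃ f : ℝ → (Fin n → ℝ) → ℝ≥0∞, Measurable (Function.uncurry f) ∧
    P = (fun t => NE n α p q (f t), fun t => NE n α p q fun y => Mx (fun s => f s y) t)}

lemma Fam_meas (n : ℕ) (α p q : Fin n → ℝ) (hp : ∀ i, 1 < p i) (hq : ∀ i, 1 < q i) :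
    ∀ P ∈ Fam n α p q, Measurable P.1 ∧ Measurable P.2 := by
  rintro P ⟨f, hf, rfl⟩
  exact ⟨NE_meas n α p q hp hq f hf, NE_meas n α p q hp hq (fun t y => Mx (fun s => f s y) t) (Mx2_meas f hf)⟩

/-- auxiliary family. -/
def Gam (n : ℕ) (α p q : Fin n → ℝ) (r : ℝ) : Set ((ℝ → ℝ≥0∞) × (ℝ → ℝ≥0∞)) :=
  {P | ∃ (k : ℤ) (f : ℝ → ℝ → (Fin n → ℝ) → ℝ≥0∞), Measurable (fun z : (ℝ × ℝ) × (Fin n → ℝ) => f z.1.1 z.1.2 z.2) ∧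
    P = (fun t => (∫⁻ z in herzRing k, NE n α p q (f t z) ^ r) ^ r⁻¹,
      fun t => (∫⁻ z in herzRing k, NE n α p q (fun y => Mx (fun s => f s z y) t) ^ r) ^ r⁻¹)}

lemma Gam_aux (n : ℕ) (α p q : Fin n → ℝ) (hp : ∀ i, 1 < p i) (hq : ∀ i, 1 < q i)
    (f : ℝ → ℝ → (Fin n → ℝ) → ℝ≥0∞) (hf : Measurable (fun z : (ℝ × ℝ) × (Fin n → ℝ) => f z.1.1 z.1.2 z.2)) :
    Measurable (fun z : ℝ × ℝ => NE n α p q (f z.1 z.2)) ∧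
    Measurable (fun z : ℝ × ℝ => NE n α p q (fun y => Mx (fun s => f s z.2 y) z.1)) := by
  refine ⟨NE_meas n α p q hp hq (fun z : ℝ × ℝ => f z.1 z.2) hf, ?_⟩
  refine NE_meas n α p q hp hq (fun (z : ℝ × ℝ) y => Mx (fun s => f s z.2 y) z.1) ?_
  have := Mx2_meas (γ := ℝ × (Fin n → ℝ)) (fun t z => f t z.1 z.2) (by
    refine hf.comp (Measurable.prodMk (Measurable.prodMk measurable_fst (measurable_fst.comp measurable_snd)) (measurable_snd.comp measurable_snd)))
  exact this.comp (Measurable.prodMk (measurable_fst.comp measurable_fst) (Measurable.prodMk (measurable_snd.comp measurable_fst) measurable_snd))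

lemma Gam_meas (n : ℕ) (α p q : Fin n → ℝ) (hp : ∀ i, 1 < p i) (hq : ∀ i, 1 < q i) (r : ℝ) :
    ∀ P ∈ Gam n α p q r, Measurable P.1 ∧ Measurable P.2 := by
  rintro P ⟨k, f, hf, rfl⟩
  obtain ⟨h1, h2⟩ := Gam_aux n α p q hp hq f hf
  exact ⟨(Measurable.lintegral_prod_right' (h1.pow_const r)).pow_const _, (Measurable.lintegral_prod_right' (h2.pow_const r)).pow_const _⟩

lemma Gam_WB (n : ℕ) (α p q : Fin n → ℝ) (hp : ∀ i, 1 < p i) (hq : ∀ i, 1 < q i) (r : ℝ) (hr : 1 < r)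
    (h : WB (Fam n α p q) r) : WB (Gam n α p q r) r := by
  intro K hK
  obtain ⟨N, hN, H⟩ := h K hK
  refine ⟨N, hN, ?_⟩
  rintro u v hu hv P ⟨k, f, hf, rfl⟩
  obtain ⟨h1, h2⟩ := Gam_aux n α p q hp hq f hf
  have hr0 : r ≠ 0 := by linarith
  simp only [ENNReal.rpow_inv_rpow hr0]
  have hwm : Measurable fun x => u x ^ (1 - r) * v x := (hu.1.pow_const _).mul hv.1
  have key : ∀ g : ℝ → ℝ → ℝ≥0∞, Measurable (fun z : ℝ × ℝ => g z.1 z.2) →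
      ∫⁻ t, (∫⁻ z in herzRing k, g t z ^ r) * (u t ^ (1 - r) * v t) = ∫⁻ z in herzRing k, ∫⁻ t, g t z ^ r * (u t ^ (1 - r) * v t) := by
    intro g hg
    rw [← lintegral_lintegral_swap]
    · congr 1; funext t
      rw [lintegral_mul_const]
      exact (hg.comp (measurable_const.prodMk measurable_id)).pow_const r
    · exact ((hg.pow_const r).mul (hwm.comp measurable_fst)).aemeasurable
  rw [key _ h2, key _ h1, ← lintegral_const_mul' _ _ hN]
  refine lintegral_mono fun z => ?_
  refine H u v hu hv _ ⟨fun t y => f t z y, ?_, rfl⟩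
  exact hf.comp (Measurable.prodMk (Measurable.prodMk measurable_fst measurable_const) measurable_snd)

theorem Fam_WB (n : ℕ) : ∀ (α p q : Fin n → ℝ) (_ : ∀ i, 1 < p i) (_ : ∀ i, 1 < q i) (r : ℝ) (_ : 1 < r),
    WB (Fam n α p q) r := by
  induction n with
  | zero =>
    intro α p q hp hq r hr K hK
    obtain ⟨N, hN, H⟩ := muck r hr K hK
    refine ⟨N, hN, ?_⟩
    rintro u v hu hv P ⟨f, hf, rfl⟩
    simp only [NE_zero _ _ _ _ (fun i => i.elim0)]
    exact H u v hu hv _ (hf.comp (measurable_id.prodMk measurable_const))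
  | succ n ih =>
    intro α p q hp hq r hr
    refine extrap _ (Fam_meas _ _ _ _ hp hq) (p (Fin.last n)) r (hp _) hr ?_
    have hp' : ∀ i, 1 < (Fin.init p : Fin n → ℝ) i := fun i => hp _
    have hq' : ∀ i, 1 < (Fin.init q : Fin n → ℝ) i := fun i => hq _
    have h1 := Gam_WB n (Fin.init α) (Fin.init p) (Fin.init q) hp' hq' (q (Fin.last n)) (hq _)
      (ih (Fin.init α) (Fin.init p) (Fin.init q) hp' hq' _ (hq _))
    have hGm := Gam_meas n (Fin.init α) (Fin.init p) (Fin.init q) hp' hq' (q (Fin.last n))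
    have h2 := extrap _ hGm _ (p (Fin.last n)) (hq _) (hp _) h1
    intro K hK
    obtain ⟨N, hN, H⟩ := h2 K hK
    refine ⟨N, hN, ?_⟩
    rintro u v hu hv P ⟨f, hf, rfl⟩
    set s := p (Fin.last n) with hs
    have hs1 : 1 < s := hp _
    have hs0 : 0 < s := by linarith
    have hwm : Measurable fun x => u x ^ (1 - s) * v x := (hu.1.pow_const _).mul hv.1
    simp only [NE_succ n α p q hp hq, HN]
    rw [← hs]
    simp only [ENNReal.rpow_inv_rpow hs0.ne', ENNReal.mul_rpow_of_nonneg _ _ hs0.le]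
    simp only [← ENNReal.tsum_mul_right, mul_assoc]
    have hmem : ∀ k, _ ∈ Gam n (Fin.init α) (Fin.init p) (Fin.init q) (q (Fin.last n)) := fun k =>
      ⟨k, fun t z y => f t (Fin.snoc y z), by
        refine hf.comp (Measurable.prodMk (measurable_fst.comp measurable_fst) ?_)
        exact (snoc_meas n).comp (measurable_snd.prodMk (measurable_snd.comp measurable_fst)), rfl⟩
    rw [lintegral_tsum, lintegral_tsum, ← ENNReal.tsum_mul_left]
    · refine ENNReal.tsum_le_tsum fun k => ?_
      have hct : cA (α (Fin.last n)) k ^ s ≠ ∞ := ENNReal.rpow_ne_top_of_nonneg hs0.le ENNReal.ofReal_ne_top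
      rw [lintegral_const_mul' _ _ hct, lintegral_const_mul' _ _ hct, mul_left_comm]
      refine mul_le_mul_right ?_ _
      exact H u v hu hv _ (hmem k)
    · intro k
      exact ((((hGm _ (hmem k)).1).pow_const s).mul hwm).const_mul _ |>.aemeasurable
    · intro k
      exact ((((hGm _ (hmem k)).2).pow_const s).mul hwm).const_mul _ |>.aemeasurable

/-- power weight. -/
def pw (c x : ℝ) : ℝ≥0∞ := ENNReal.ofReal |x| ^ (-c)

lemma pw_meas (c : ℝ) : Measurable (pw c) :=
  (ENNReal.measurable_ofReal.comp measurable_abs).pow_const _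

lemma pw_eq (c x : ℝ) (hx : x ≠ 0) : pw c x = ENNReal.ofReal (|x| ^ (-c)) :=
  ENNReal.ofReal_rpow_of_pos (abs_pos.2 hx)

lemma pw_int (c R : ℝ) (hc1 : c < 1) (hR : 0 < R) :
    ∫⁻ y in Set.Ioo (-R) R, pw c y ≤ ENNReal.ofReal (2 * (R ^ (1 - c) / (1 - c))) := by
  have h0 : ∫⁻ y in Set.Icc 0 R, pw c y = ENNReal.ofReal (R ^ (1 - c) / (1 - c)) := by
    rw [← setLIntegral_congr Ioc_ae_eq_Icc]
    have hi := intervalIntegral.intervalIntegrable_rpow' (a := 0) (b := R) (r := -c) (by linarith)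
    rw [intervalIntegrable_iff_integrableOn_Ioc_of_le hR.le] at hi
    have e := integral_rpow (a := 0) (b := R) (r := -c) (Or.inl (by linarith))
    rw [Real.zero_rpow (by linarith), sub_zero, show -c + 1 = 1 - c by ring, intervalIntegral.integral_of_le hR.le] at e
    rw [← e, ofReal_integral_eq_lintegral_ofReal hi]
    · refine setLIntegral_congr_fun measurableSet_Ioc fun y hy => ?_
      rw [pw_eq c y hy.1.ne', abs_of_pos hy.1]
    · refine (ae_restrict_iff' measurableSet_Ioc).2 (Eventually.of_forall fun y hy => ?_)
      exact Real.rpow_nonneg hy.1.le _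
  have h1 : ∫⁻ y in Set.Icc (-R) 0, pw c y = ∫⁻ y in Set.Icc 0 R, pw c y := by
    have := (Measure.measurePreserving_neg (volume : Measure ℝ)).setLIntegral_comp_preimage (s := Set.Icc 0 R) measurableSet_Icc (pw_meas c)
    rw [← this]
    have e : (Neg.neg ⁻¹' Set.Icc (0 : ℝ) R) = Set.Icc (-R) 0 := by
      ext y; simp only [Set.mem_preimage, Set.mem_Icc]; constructor <;> rintro ⟨h, h'⟩ <;> constructor <;> linarith
    rw [e]
    simp [pw]
  calc ∫⁻ y in Set.Ioo (-R) R, pw c y ≤ ∫⁻ y in Set.Icc (-R) 0 ∪ Set.Icc 0 R, pw c y := by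
        apply lintegral_mono_set
        intro y hy
        rcases le_total y 0 with h | h
        · exact Or.inl ⟨hy.1.le, h⟩
        · exact Or.inr ⟨h, hy.2.le⟩
    _ ≤ _ := lintegral_union_le _ _ _
    _ = _ := by
        have : 0 ≤ R ^ (1 - c) / (1 - c) := div_nonneg (Real.rpow_nonneg hR.le _) (by linarith)
        rw [h1, h0, two_mul, ENNReal.ofReal_add this this]

lemma pw_A1 (c : ℝ) (hc0 : 0 ≤ c) (hc1 : c < 1) (x : ℝ) (hx : x ≠ 0) :
    Mx (pw c) x ≤ ENNReal.ofReal (12 / (1 - c)) * pw c x := by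
  have hx' := abs_pos.2 hx
  have hK : 12 ≤ 12 / (1 - c) := by
    rw [le_div_iff₀ (by linarith)]; linarith
  have hK0 : 0 ≤ 12 / (1 - c) := by linarith
  refine iSup₂_le fun ab hab => ?_
  obtain ⟨a, b⟩ := ab
  simp only at hab ⊢
  have hlt : (a : ℝ) < b := hab.1.trans hab.2
  set L : ℝ := b - a with hL
  have hL0 : 0 < L := by rw [hL]; linarith
  have hv : volume (Set.Ioo (a : ℝ) b) = ENNReal.ofReal L := Real.volume_Ioo
  by_cases hc : L ≤ |x| / 2
  · have : ∫⁻ y in Set.Ioo (a : ℝ) b, pw c y ≤ ∫⁻ y in Set.Ioo (a : ℝ) b, ENNReal.ofReal (12 / (1 - c)) * pw c x := by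
      refine setLIntegral_mono measurable_const fun y hy => ?_
      have h1 : |x| / 2 ≤ |y| := by
        have h2 : |x - y| ≤ L := by rw [abs_le]; constructor <;> linarith [hab.1, hab.2, hy.1, hy.2]
        have h3 := abs_sub_abs_le_abs_sub x y
        linarith
      have hy0 : y ≠ 0 := by
        rintro rfl; rw [abs_zero] at h1; linarith
      rw [pw_eq c y hy0, pw_eq c x hx, ← ENNReal.ofReal_mul hK0]
      apply ENNReal.ofReal_le_ofReal
      calc |y| ^ (-c) ≤ (|x| / 2) ^ (-c) := Real.rpow_le_rpow_of_nonpos (by linarith) h1 (by linarith)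
        _ = 2 ^ c * |x| ^ (-c) := by
            rw [Real.div_rpow hx'.le (by norm_num), Real.rpow_neg (x := 2) (by norm_num), div_inv_eq_mul, mul_comm]
        _ ≤ _ := by
            gcongr
            calc (2 : ℝ) ^ c ≤ 2 ^ (1 : ℝ) := Real.rpow_le_rpow_of_exponent_le (by norm_num) hc1.le
              _ ≤ _ := by rw [Real.rpow_one]; linarith
    refine (mul_le_mul_right this _).trans ?_
    rw [setLIntegral_const, mul_comm, mul_assoc, ENNReal.mul_inv_cancel, mul_one]
    · rw [hv]; simp [hL0]
    · rw [hv]; simp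
  · push Not at hc
    have hsub : Set.Ioo (a : ℝ) b ⊆ Set.Ioo (-(3 * L)) (3 * L) := by
      intro y hy
      have h1 := abs_lt.1 (show |x| < 2 * L by linarith)
      constructor <;> linarith [hab.1, hab.2, hy.1, hy.2]
    have h2 := (lintegral_mono_set (μ := volume) (f := pw c) hsub).trans (pw_int c (3 * L) hc1 (by linarith))
    refine (mul_le_mul_right h2 _).trans ?_
    rw [hv, ← ENNReal.ofReal_inv_of_pos hL0, ← ENNReal.ofReal_mul (by positivity), pw_eq c x hx, ← ENNReal.ofReal_mul hK0]
    apply ENNReal.ofReal_le_ofReal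
    have h3 : (2 * L) ^ (-c) ≤ |x| ^ (-c) := Real.rpow_le_rpow_of_nonpos hx' (by linarith) (by linarith)
    have h4 : (3 * L) ^ (1 - c) ≤ 6 * L * (2 * L) ^ (-c) := by
      rw [Real.mul_rpow (by norm_num) hL0.le, Real.mul_rpow (by norm_num) hL0.le, Real.rpow_sub hL0, Real.rpow_one, Real.rpow_neg hL0.le]
      have h5 : (3 : ℝ) ^ (1 - c) ≤ 6 * 2 ^ (-c) := by
        have h6 : (3 : ℝ) ^ (1 - c) ≤ 3 := by
          calc (3 : ℝ) ^ (1 - c) ≤ 3 ^ (1 : ℝ) := Real.rpow_le_rpow_of_exponent_le (by norm_num) (by linarith)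
            _ = 3 := Real.rpow_one _
        have h7 : (2 : ℝ)⁻¹ ≤ 2 ^ (-c) := by
          calc (2 : ℝ)⁻¹ = 2 ^ (-1 : ℝ) := by rw [Real.rpow_neg_one]
            _ ≤ _ := Real.rpow_le_rpow_of_exponent_le (by norm_num) (by linarith)
        linarith
      calc (3 : ℝ) ^ (1 - c) * (L / L ^ c) ≤ (6 * 2 ^ (-c)) * (L / L ^ c) := by gcongr
        _ = _ := by ring
    have hcc : 0 < 1 - c := by linarith
    calc L⁻¹ * (2 * ((3 * L) ^ (1 - c) / (1 - c))) ≤ L⁻¹ * (2 * (6 * L * |x| ^ (-c) / (1 - c))) := by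
          gcongr
          exact h4.trans (by gcongr)
      _ = _ := by field_simp; ring

lemma Mx_add_le (f g : ℝ → ℝ≥0∞) (hf : Measurable f) (x : ℝ) : Mx (fun y => f y + g y) x ≤ Mx f x + Mx g x := by
  refine iSup₂_le fun ab hx => ?_
  rw [lintegral_add_left hf, mul_add]
  exact add_le_add (le_Mmu volume f x _ _ hx) (le_Mmu volume g x _ _ hx)

lemma Mx_const_le (c : ℝ≥0∞) (x : ℝ) : Mx (fun _ => c) x ≤ c := by
  refine iSup₂_le fun ab hx => ?_
  rw [setLIntegral_const, mul_left_comm, ENNReal.inv_mul_cancel, mul_one]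
  · exact vol_Ioo_ne_zero _ _ (by exact_mod_cast hx.1.trans hx.2)
  · exact vol_Ioo_ne_top _ _

lemma ae_ne_zero : ∀ᵐ x : ℝ, x ≠ 0 := by
  rw [ae_iff]; simp

lemma pw_ne (c x : ℝ) (hx : x ≠ 0) : pw c x ≠ 0 ∧ pw c x ≠ ∞ := by
  rw [pw_eq c x hx]
  refine ⟨?_, ENNReal.ofReal_ne_top⟩
  have : 0 < |x| ^ (-c) := Real.rpow_pos_of_pos (abs_pos.2 hx) _
  simpa using this

lemma A1_u (c : ℝ) (hc0 : 0 ≤ c) (hc1 : c < 1) (κ : ℝ≥0∞) (hκ : κ ≠ ∞) :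
    A1 (ENNReal.ofReal (12 / (1 - c))) fun x => 1 + κ * pw c x := by
  refine ⟨((pw_meas c).const_mul κ).const_add 1, ?_⟩
  filter_upwards [ae_ne_zero] with x hx
  refine ⟨by simp, by simp [ENNReal.mul_ne_top hκ (pw_ne c x hx).2], ?_⟩
  have hK : 1 ≤ 12 / (1 - c) := by
    rw [le_div_iff₀ (by linarith)]; linarith
  refine (Mx_add_le _ _ measurable_const x).trans ?_
  rw [mul_add]
  refine add_le_add ?_ ?_
  · rw [mul_one]; exact (Mx_const_le 1 x).trans (by simpa using hK)
  · refine (Mx_const_mul_le κ _ (pw_meas c) x).trans ?_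
    rw [mul_left_comm]
    exact mul_le_mul_right (pw_A1 c hc0 hc1 x hx) _

lemma A1_v (c : ℝ) (hc0 : 0 ≤ c) (hc1 : c < 1) (κ : ℝ≥0∞) (hκ0 : κ ≠ 0) :
    A1 (ENNReal.ofReal (12 / (1 - c))) fun x => min 1 (κ * pw c x) := by
  refine ⟨measurable_const.min ((pw_meas c).const_mul κ), ?_⟩
  filter_upwards [ae_ne_zero] with x hx
  have hK : 1 ≤ 12 / (1 - c) := by
    rw [le_div_iff₀ (by linarith)]; linarith
  refine ⟨?_, ?_, ?_⟩
  · rcases min_choice 1 (κ * pw c x) with h | h <;> rw [h]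
    · simp
    · exact mul_ne_zero hκ0 (pw_ne c x hx).1
  · exact ((min_le_left _ _).trans_lt ENNReal.one_lt_top).ne
  · have h1 : Mx (fun x => min 1 (κ * pw c x)) x ≤ ENNReal.ofReal (12 / (1 - c)) * 1 := by
      rw [mul_one]
      refine (Mx_mono (fun y => min_le_left _ _) x).trans ((Mx_const_le 1 x).trans (by simpa using hK))
    have h2 : Mx (fun x => min 1 (κ * pw c x)) x ≤ ENNReal.ofReal (12 / (1 - c)) * (κ * pw c x) := by
      refine (Mx_mono (fun y => min_le_right _ _) x).trans ((Mx_const_mul_le κ _ (pw_meas c) x).trans ?_)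
      rw [mul_left_comm]
      exact mul_le_mul_right (pw_A1 c hc0 hc1 x hx) _
    rcases min_choice 1 (κ * pw c x) with h | h <;> rw [h]
    · exact h1
    · exact h2

lemma mem_ring (k : ℤ) (x : ℝ) : x ∈ herzRing k ↔ (2 : ℝ) ^ (k - 1) ≤ |x| ∧ |x| < (2 : ℝ) ^ k := by
  simp only [herzRing, Set.mem_diff, Set.mem_Ioo, ← abs_lt, not_lt]
  exact and_comm

lemma two_zpow_ofReal (t : ℝ) : ENNReal.ofReal ((2 : ℝ) ^ t) = (2 : ℝ≥0∞) ^ t := by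
  rw [← ENNReal.ofReal_rpow_of_pos (by norm_num)]; simp

lemma cA_eq (α : ℝ) (k : ℤ) : cA α k = (2 : ℝ≥0∞) ^ ((k : ℝ) * α) := two_zpow_ofReal _

lemma ring_bd (k : ℤ) (x : ℝ) (h : x ∈ herzRing k) :
    (2 : ℝ≥0∞) ^ ((k : ℝ) - 1) ≤ ENNReal.ofReal |x| ∧ ENNReal.ofReal |x| ≤ (2 : ℝ≥0∞) ^ (k : ℝ) := by
  obtain ⟨h1, h2⟩ := (mem_ring k x).1 h
  constructor
  · rw [← two_zpow_ofReal]
    apply ENNReal.ofReal_le_ofReal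
    rw [show (k : ℝ) - 1 = ((k - 1 : ℤ) : ℝ) by push_cast; ring, Real.rpow_intCast]; exact h1
  · rw [← two_zpow_ofReal]
    apply ENNReal.ofReal_le_ofReal
    rw [Real.rpow_intCast]; exact h2.le

lemma ring_pw (c : ℝ) (hc : 0 ≤ c) (k : ℤ) (x : ℝ) (h : x ∈ herzRing k) :
    pw c x ≤ (2 : ℝ≥0∞) ^ (-((k : ℝ) - 1) * c) ∧ (2 : ℝ≥0∞) ^ (-(k : ℝ) * c) ≤ pw c x := by
  obtain ⟨h1, h2⟩ := ring_bd k x h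
  unfold pw
  rw [ENNReal.rpow_neg]
  constructor
  · rw [show -((k : ℝ) - 1) * c = -(((k : ℝ) - 1) * c) by ring, ENNReal.rpow_neg, ENNReal.rpow_mul]
    exact ENNReal.inv_le_inv.2 (ENNReal.rpow_le_rpow h1 hc)
  · rw [show -(k : ℝ) * c = -((k : ℝ) * c) by ring, ENNReal.rpow_neg, ENNReal.rpow_mul]
    exact ENNReal.inv_le_inv.2 (ENNReal.rpow_le_rpow h2 hc)

lemma lint_le_rings (f : ℝ → ℝ≥0∞) : ∫⁻ x, f x ≤ ∑' j : ℤ, ∫⁻ x in herzRing j, f x := by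
  have : (volume : Measure ℝ).restrict (⋃ j : ℤ, herzRing j) = volume := by
    apply Measure.restrict_eq_self_of_ae_mem
    filter_upwards [ae_ne_zero] with x hx
    obtain ⟨n, h1, h2⟩ := exists_mem_Ico_zpow (abs_pos.2 hx) (y := (2 : ℝ)) (by norm_num)
    refine Set.mem_iUnion.2 ⟨n + 1, (mem_ring _ _).2 ⟨by simpa using h1, h2⟩⟩
  conv_lhs => rw [← this]
  exact lintegral_iUnion_le _ _

/-- decay. -/
def gam (ε : ℝ) (m : ℤ) : ℝ≥0∞ := (2 : ℝ≥0∞) ^ (-|(m : ℝ)| * ε)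

lemma gam_sum (ε : ℝ) : ∑' m : ℤ, gam ε m ≤ 2 * geoC ε := by
  rw [tsum_of_nat_of_neg_add_one ENNReal.summable ENNReal.summable, two_mul]
  refine add_le_add ?_ ?_
  · rw [← geoC_eq]
    refine ENNReal.tsum_le_tsum fun i => ?_
    simp [gam]
  · have e : ∀ i : ℕ, gam ε (-((i : ℤ) + 1)) = (fun i : ℕ => (2 : ℝ≥0∞) ^ (-(i : ℝ) * ε)) (i + 1) := by
      intro i
      simp only [gam]
      push_cast
      rw [abs_neg, abs_of_nonneg (by positivity)]
    simp only [e]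
    rw [← geoC_eq]
    exact ENNReal.tsum_comp_le_tsum_of_injective (add_left_injective 1) _

lemma gam_rpow (ε s : ℝ) (m : ℤ) : gam ε m ^ s = gam (ε * s) m := by
  unfold gam; rw [← ENNReal.rpow_mul]; ring_nf

lemma gam_half (ε : ℝ) (m : ℤ) : gam (ε / 2) m * gam (ε / 2) m = gam ε m := by
  unfold gam; rw [← ENNReal.rpow_add _ _ (by norm_num) (by norm_num)]; ring_nf

lemma young_disc (ε s : ℝ) (hε : 0 < ε) (hs : 0 < s) : ∃ D : ℝ≥0∞, D ≠ ∞ ∧ ∀ a : ℤ → ℝ≥0∞,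
    ∑' k : ℤ, (∑' j : ℤ, gam ε (k - j) * a j) ^ s ≤ D * ∑' j : ℤ, a j ^ s := by
  refine ⟨(2 * geoC (ε / 2)) ^ s * (2 * geoC (ε / 2 * s)), ?_, ?_⟩
  · refine ENNReal.mul_ne_top (ENNReal.rpow_ne_top_of_nonneg hs.le (ENNReal.mul_ne_top (by norm_num) (geoC_ne_top (by positivity))))
      (ENNReal.mul_ne_top (by norm_num) (geoC_ne_top (by positivity)))
  intro a
  have h1 : ∀ k : ℤ, (∑' j : ℤ, gam ε (k - j) * a j) ^ s ≤ (2 * geoC (ε / 2)) ^ s * ∑' j : ℤ, gam (ε / 2 * s) (k - j) * a j ^ s := by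
    intro k
    have := tsum_weighted_rpow_le (fun j : ℤ => gam (ε / 2) (k - j)) (fun j : ℤ => gam (ε / 2) (k - j) * a j) s hs
    simp only [← mul_assoc, gam_half] at this
    refine this.trans ?_
    refine mul_le_mul ?_ ?_ zero_le zero_le
    · refine ENNReal.rpow_le_rpow ?_ hs.le
      exact ((Equiv.subLeft k).tsum_eq (gam (ε / 2))).trans_le (gam_sum _)
    · refine ENNReal.tsum_le_tsum fun j => ?_
      rw [ENNReal.mul_rpow_of_nonneg _ _ hs.le, gam_rpow]
  refine (ENNReal.tsum_le_tsum h1).trans ?_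
  rw [ENNReal.tsum_mul_left, ENNReal.tsum_comm, mul_assoc]
  refine mul_le_mul_right ?_ _
  rw [← ENNReal.tsum_mul_left]
  refine ENNReal.tsum_le_tsum fun j => ?_
  rw [ENNReal.tsum_mul_right]
  refine mul_le_mul_left ?_ _
  exact ((Equiv.subRight j).tsum_eq (gam (ε / 2 * s))).trans_le (gam_sum _)

lemma weight_lo (q c b : ℝ) (hq : 1 < q) (hc0 : 0 ≤ c) (hc1 : c < 1) (hb0 : 0 ≤ b) (k : ℤ) (x : ℝ) (hx : x ∈ herzRing k) :
    (3 : ℝ≥0∞) ^ (1 - q) ≤ (1 + (2 : ℝ≥0∞) ^ ((k : ℝ) * c) * pw c x) ^ (1 - q) * min 1 ((2 : ℝ≥0∞) ^ ((k : ℝ) * b) * pw b x) := by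
  have h1 := (ring_pw c hc0 k x hx).1
  have h2 := (ring_pw b hb0 k x hx).2
  have e2 : (1 : ℝ≥0∞) ≤ (2 : ℝ≥0∞) ^ ((k : ℝ) * b) * pw b x := by
    calc (1 : ℝ≥0∞) = (2 : ℝ≥0∞) ^ ((k : ℝ) * b) * (2 : ℝ≥0∞) ^ (-(k : ℝ) * b) := by
          rw [← ENNReal.rpow_add _ _ (by norm_num) (by norm_num)]; ring_nf; simp
      _ ≤ _ := by gcongr
  rw [min_eq_left e2, mul_one, show 1 - q = -(q - 1) by ring, ENNReal.rpow_neg, ENNReal.rpow_neg]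
  refine ENNReal.inv_le_inv.2 (ENNReal.rpow_le_rpow ?_ (by linarith))
  calc 1 + (2 : ℝ≥0∞) ^ ((k : ℝ) * c) * pw c x ≤ 1 + (2 : ℝ≥0∞) ^ ((k : ℝ) * c) * (2 : ℝ≥0∞) ^ (-((k : ℝ) - 1) * c) := by gcongr
    _ = 1 + (2 : ℝ≥0∞) ^ c := by
        rw [← ENNReal.rpow_add _ _ (by norm_num) (by norm_num)]; ring_nf
    _ ≤ 1 + (2 : ℝ≥0∞) ^ (1 : ℝ) := by
        gcongr
        norm_num
    _ = 3 := by rw [ENNReal.rpow_one]; norm_num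

lemma weight_hi (α q c b ε : ℝ) (hq : 1 < q) (hc0 : 0 ≤ c) (hb0 : 0 ≤ b) (hb1 : b < 1)
    (h1 : ε ≤ c * (q - 1) - α * q) (h2 : ε ≤ b + α * q) (k j : ℤ) (x : ℝ) (hx : x ∈ herzRing j) :
    (1 + (2 : ℝ≥0∞) ^ ((k : ℝ) * c) * pw c x) ^ (1 - q) * min 1 ((2 : ℝ≥0∞) ^ ((k : ℝ) * b) * pw b x)
      ≤ 2 * gam ε (k - j) * (2 : ℝ≥0∞) ^ (((j : ℝ) - k) * α * q) := by
  have g1 := (ring_pw c hc0 j x hx).2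
  have g2 := (ring_pw b hb0 j x hx).1
  have hu1 : (1 : ℝ≥0∞) ≤ 1 + (2 : ℝ≥0∞) ^ ((k : ℝ) * c) * pw c x := le_self_add
  rw [gam, mul_assoc, ← ENNReal.rpow_add _ _ (by norm_num) (by norm_num)]
  rcases le_total j k with hjk | hjk
  · have hjk' : (j : ℝ) ≤ k := by exact_mod_cast hjk
    have e1 : (2 : ℝ≥0∞) ^ (((k : ℝ) - j) * c) ≤ 1 + (2 : ℝ≥0∞) ^ ((k : ℝ) * c) * pw c x := by
      calc (2 : ℝ≥0∞) ^ (((k : ℝ) - j) * c) = (2 : ℝ≥0∞) ^ ((k : ℝ) * c) * (2 : ℝ≥0∞) ^ (-(j : ℝ) * c) := by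
            rw [← ENNReal.rpow_add _ _ (by norm_num) (by norm_num)]; ring_nf
        _ ≤ (2 : ℝ≥0∞) ^ ((k : ℝ) * c) * pw c x := by gcongr
        _ ≤ _ := le_add_self
    have e2 : (1 + (2 : ℝ≥0∞) ^ ((k : ℝ) * c) * pw c x) ^ (1 - q) ≤ (2 : ℝ≥0∞) ^ (((k : ℝ) - j) * c * (1 - q)) := by
      rw [ENNReal.rpow_mul 2 _ (1 - q), show 1 - q = -(q - 1) by ring, ENNReal.rpow_neg, ENNReal.rpow_neg]
      exact ENNReal.inv_le_inv.2 (ENNReal.rpow_le_rpow e1 (by linarith))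
    refine (mul_le_mul' e2 (min_le_left _ _)).trans ?_
    rw [mul_one]
    refine le_trans ?_ (le_mul_of_one_le_left zero_le (by norm_num))
    refine ENNReal.rpow_le_rpow_of_exponent_le (by norm_num) ?_
    push_cast
    rw [abs_of_nonneg (by linarith)]
    nlinarith [mul_le_mul_of_nonneg_left h1 (show 0 ≤ (k : ℝ) - j by linarith)]
  · have hjk' : (k : ℝ) ≤ j := by exact_mod_cast hjk
    have e2 : (1 + (2 : ℝ≥0∞) ^ ((k : ℝ) * c) * pw c x) ^ (1 - q) ≤ 1 := by
      rw [show 1 - q = -(q - 1) by ring, ENNReal.rpow_neg]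
      exact ENNReal.inv_le_one.2 (ENNReal.one_le_rpow hu1 (by linarith))
    have e3 : (2 : ℝ≥0∞) ^ ((k : ℝ) * b) * pw b x ≤ (2 : ℝ≥0∞) ^ (1 + ((k : ℝ) - j) * b) := by
      calc (2 : ℝ≥0∞) ^ ((k : ℝ) * b) * pw b x ≤ (2 : ℝ≥0∞) ^ ((k : ℝ) * b) * (2 : ℝ≥0∞) ^ (-((j : ℝ) - 1) * b) := by gcongr
        _ = (2 : ℝ≥0∞) ^ ((k : ℝ) * b + -((j : ℝ) - 1) * b) := by
            rw [← ENNReal.rpow_add _ _ (by norm_num) (by norm_num)]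
        _ ≤ _ := ENNReal.rpow_le_rpow_of_exponent_le (by norm_num) (by linarith)
    refine (mul_le_mul' e2 ((min_le_right _ _).trans e3)).trans ?_
    rw [one_mul, ENNReal.rpow_add _ _ (by norm_num) (by norm_num), ENNReal.rpow_one]
    refine mul_le_mul_right ?_ _
    refine ENNReal.rpow_le_rpow_of_exponent_le (by norm_num) ?_
    push_cast
    rw [abs_of_nonpos (by linarith)]
    nlinarith [mul_le_mul_of_nonneg_left h2 (show 0 ≤ (j : ℝ) - k by linarith)]

theorem herz_step (α p q : ℝ) (hp : 1 < p) (hq : 1 < q) (hα1 : -(1 / q) < α) (hα2 : α < 1 - 1 / q)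
    (𝓕 : Set ((ℝ → ℝ≥0∞) × (ℝ → ℝ≥0∞))) (h : WB 𝓕 q) :
    ∃ C : ℝ≥0∞, C ≠ ∞ ∧ ∀ P ∈ 𝓕, HN α p q P.2 ≤ C * HN α p q P.1 := by
  have hq0 : 0 < q := by linarith
  have hq1 : 0 < q - 1 := by linarith
  have hp0 : 0 < p := by linarith
  have ha1 : -1 < α * q := by
    have := mul_lt_mul_of_pos_right hα1 hq0
    rwa [neg_mul, one_div, inv_mul_cancel₀ hq0.ne'] at this
  have ha2 : α * q < q - 1 := by
    have := mul_lt_mul_of_pos_right hα2 hq0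
    rwa [sub_mul, one_div, inv_mul_cancel₀ hq0.ne', one_mul] at this
  obtain ⟨c, hc0, hc1, hc2⟩ : ∃ c : ℝ, 0 ≤ c ∧ c < 1 ∧ α * q < c * (q - 1) := by
    have hm : max 0 (α * q / (q - 1)) < 1 := max_lt (by norm_num) (by rw [div_lt_one hq1]; exact ha2)
    obtain ⟨c, h1, h2⟩ := exists_between hm
    refine ⟨c, (le_max_left _ _).trans h1.le, h2, ?_⟩
    rw [← div_lt_iff₀ hq1]
    exact (le_max_right _ _).trans_lt h1
  obtain ⟨b, hb0, hb1, hb2⟩ : ∃ b : ℝ, 0 ≤ b ∧ b < 1 ∧ -(α * q) < b := by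
    have hm : max 0 (-(α * q)) < 1 := max_lt (by norm_num) (by linarith)
    obtain ⟨c, h1, h2⟩ := exists_between hm
    exact ⟨c, (le_max_left _ _).trans h1.le, h2, (le_max_right _ _).trans_lt h1⟩
  set ε := min (c * (q - 1) - α * q) (b + α * q) with hε
  have hε0 : 0 < ε := lt_min (by linarith) (by linarith)
  obtain ⟨N, hN, H⟩ := h (max (ENNReal.ofReal (12 / (1 - c))) (ENNReal.ofReal (12 / (1 - b)))) (by simp)
  have hpq : 0 < p / q := by positivity
  obtain ⟨D, hD, HD⟩ := young_disc ε (p / q) hε0 hpq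
  set E : ℝ≥0∞ := (3 : ℝ≥0∞) ^ (q - 1) * (N * 2) with hE
  have hEt : E ≠ ∞ := ENNReal.mul_ne_top (ENNReal.rpow_ne_top_of_nonneg hq1.le (by norm_num)) (ENNReal.mul_ne_top hN (by norm_num))
  refine ⟨(E ^ (p / q) * D) ^ p⁻¹, ENNReal.rpow_ne_top_of_nonneg (by positivity) (ENNReal.mul_ne_top (ENNReal.rpow_ne_top_of_nonneg hpq.le hEt) hD), ?_⟩
  intro P hP
  set A : ℤ → ℝ≥0∞ := fun j => ∫⁻ x in herzRing j, P.1 x ^ q with hA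
  set B : ℤ → ℝ≥0∞ := fun j => ∫⁻ x in herzRing j, P.2 x ^ q with hB
  have key : ∀ k : ℤ, cA α k ^ q * B k ≤ E * ∑' j : ℤ, gam ε (k - j) * (cA α j ^ q * A j) := by
    intro k
    have HH := H _ _ ((A1_u c hc0 hc1 ((2 : ℝ≥0∞) ^ ((k : ℝ) * c)) (two_rpow_ne_top _)).mono (le_max_left _ _))
      ((A1_v b hb0 hb1 ((2 : ℝ≥0∞) ^ ((k : ℝ) * b)) (two_rpow_ne_zero _)).mono (le_max_right _ _)) P hP
    have l1 : B k * (3 : ℝ≥0∞) ^ (1 - q) ≤ ∫⁻ x, P.2 x ^ q * ((1 + (2 : ℝ≥0∞) ^ ((k : ℝ) * c) * pw c x) ^ (1 - q) * min 1 ((2 : ℝ≥0∞) ^ ((k : ℝ) * b) * pw b x)) := by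
      refine le_trans ?_ (setLIntegral_le_lintegral (herzRing k) _)
      rw [hB]
      simp only []
      rw [← lintegral_mul_const' _ _ (ENNReal.rpow_ne_top_of_ne_zero (by norm_num) (by norm_num))]
      refine setLIntegral_mono' (herzRing_meas k) fun x hx => ?_
      exact mul_le_mul_right (weight_lo q c b hq hc0 hc1 hb0 k x hx) _
    have l2 : ∫⁻ x, P.1 x ^ q * ((1 + (2 : ℝ≥0∞) ^ ((k : ℝ) * c) * pw c x) ^ (1 - q) * min 1 ((2 : ℝ≥0∞) ^ ((k : ℝ) * b) * pw b x))
        ≤ ∑' j : ℤ, A j * (2 * gam ε (k - j) * (2 : ℝ≥0∞) ^ (((j : ℝ) - k) * α * q)) := by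
      refine (lint_le_rings _).trans (ENNReal.tsum_le_tsum fun j => ?_)
      have hgt : 2 * gam ε (k - j) * (2 : ℝ≥0∞) ^ (((j : ℝ) - k) * α * q) ≠ ∞ :=
        ENNReal.mul_ne_top (ENNReal.mul_ne_top (by norm_num) (two_rpow_ne_top _)) (two_rpow_ne_top _)
      rw [hA]
      simp only []
      rw [← lintegral_mul_const' _ _ hgt]
      refine setLIntegral_mono' (herzRing_meas j) fun x hx => ?_
      exact mul_le_mul_right (weight_hi α q c b ε hq hc0 hb0 hb1 (min_le_left _ _) (min_le_right _ _) k j x hx) _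
    have l3 := l1.trans (HH.trans (mul_le_mul_right l2 N))
    have e3 : (3 : ℝ≥0∞) ^ (1 - q) * (3 : ℝ≥0∞) ^ (q - 1) = 1 := by
      rw [← ENNReal.rpow_add _ _ (by norm_num) (by norm_num)]; simp
    calc cA α k ^ q * B k = cA α k ^ q * (3 : ℝ≥0∞) ^ (q - 1) * (B k * (3 : ℝ≥0∞) ^ (1 - q)) := by
          calc _ = cA α k ^ q * B k * ((3 : ℝ≥0∞) ^ (1 - q) * (3 : ℝ≥0∞) ^ (q - 1)) := by rw [e3, mul_one]
            _ = _ := by ring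
      _ ≤ cA α k ^ q * (3 : ℝ≥0∞) ^ (q - 1) * (N * ∑' j : ℤ, A j * (2 * gam ε (k - j) * (2 : ℝ≥0∞) ^ (((j : ℝ) - k) * α * q))) :=
          mul_le_mul_right l3 _
      _ = _ := by
          rw [← ENNReal.tsum_mul_left, ← ENNReal.tsum_mul_left, ← ENNReal.tsum_mul_left]
          congr 1; funext j
          have ec : cA α k ^ q * (2 : ℝ≥0∞) ^ (((j : ℝ) - k) * α * q) = cA α j ^ q := by
            rw [cA_eq, cA_eq, ← ENNReal.rpow_mul, ← ENNReal.rpow_mul, ← ENNReal.rpow_add _ _ (by norm_num) (by norm_num)]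
            ring_nf
          rw [← ec, hE]; ring
  have ee : ∀ (k : ℤ) (y : ℝ≥0∞), (cA α k * y ^ q⁻¹) ^ p = (cA α k ^ q * y) ^ (p / q) := by
    intro k y
    rw [ENNReal.mul_rpow_of_nonneg _ _ hp0.le, ENNReal.mul_rpow_of_nonneg _ _ hpq.le, ← ENNReal.rpow_mul, ← ENNReal.rpow_mul]
    congr 2 <;> field_simp
  have fin : ∑' k : ℤ, (cA α k * (B k) ^ q⁻¹) ^ p ≤ E ^ (p / q) * D * ∑' k : ℤ, (cA α k * (A k) ^ q⁻¹) ^ p := by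
    simp only [ee]
    rw [mul_assoc]
    refine le_trans ?_ (mul_le_mul_right (HD fun j => cA α j ^ q * A j) _)
    rw [← ENNReal.tsum_mul_left]
    refine ENNReal.tsum_le_tsum fun k => ?_
    rw [← ENNReal.mul_rpow_of_nonneg _ _ hpq.le]
    exact ENNReal.rpow_le_rpow (key k) hpq.le
  have := ENNReal.rpow_le_rpow fin (show 0 ≤ p⁻¹ by positivity)
  rwa [ENNReal.mul_rpow_of_nonneg _ _ (by positivity)] at this

lemma HN_mono (α p q : ℝ) (hp : 1 < p) (hq : 1 < q) {f g : ℝ → ℝ≥0∞} (h : ∀ x, f x ≤ g x) : HN α p q f ≤ HN α p q g := by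
  unfold HN
  refine ENNReal.rpow_le_rpow (ENNReal.tsum_le_tsum fun k => ENNReal.rpow_le_rpow (mul_le_mul_right (ENNReal.rpow_le_rpow (lintegral_mono fun x => ENNReal.rpow_le_rpow (h x) (by linarith)) ?_) _) (by linarith)) ?_
  · rw [inv_nonneg]; linarith
  · rw [inv_nonneg]; linarith

lemma HN_const_mul (α p q : ℝ) (hp : 1 < p) (hq : 1 < q) (C : ℝ≥0∞) (hC : C ≠ ∞) (f : ℝ → ℝ≥0∞) :
    HN α p q (fun x => C * f x) = C * HN α p q f := by
  have hp0 : 0 < p := by linarith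
  have hq0 : 0 < q := by linarith
  unfold HN
  have h1 : ∀ k : ℤ, (cA α k * (∫⁻ x in herzRing k, (C * f x) ^ q) ^ q⁻¹) ^ p = C ^ p * (cA α k * (∫⁻ x in herzRing k, f x ^ q) ^ q⁻¹) ^ p := by
    intro k
    simp only [ENNReal.mul_rpow_of_nonneg _ _ hq0.le]
    rw [lintegral_const_mul' _ _ (ENNReal.rpow_ne_top_of_nonneg hq0.le hC), ENNReal.mul_rpow_of_nonneg (C ^ q) _ (show 0 ≤ q⁻¹ by positivity),
      ENNReal.rpow_rpow_inv hq0.ne', mul_left_comm, ENNReal.mul_rpow_of_nonneg _ _ hp0.le]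
  simp only [h1]
  rw [ENNReal.tsum_mul_left, ENNReal.mul_rpow_of_nonneg _ _ (by positivity), ENNReal.rpow_rpow_inv hp0.ne']

lemma NE_mono (n : ℕ) : ∀ (α p q : Fin n → ℝ) (_ : ∀ i, 1 < p i) (_ : ∀ i, 1 < q i) (f g : (Fin n → ℝ) → ℝ≥0∞),
    (∀ x, f x ≤ g x) → NE n α p q f ≤ NE n α p q g := by
  induction n with
  | zero =>
    intro α p q hp hq f g h
    exact h _
  | succ n ih =>
    intro α p q hp hq f g h
    rw [NE_succ n α p q hp hq, NE_succ n α p q hp hq]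
    exact HN_mono _ _ _ (hp _) (hq _) fun t => ih _ _ _ (fun i => hp _) (fun i => hq _) _ _ fun y => h _

lemma NE_const_mul (n : ℕ) : ∀ (α p q : Fin n → ℝ) (_ : ∀ i, 1 < p i) (_ : ∀ i, 1 < q i) (C : ℝ≥0∞) (_ : C ≠ ∞) (f : (Fin n → ℝ) → ℝ≥0∞),
    NE n α p q (fun x => C * f x) = C * NE n α p q f := by
  induction n with
  | zero =>
    intro α p q hp hq C hC f
    rfl
  | succ n ih =>
    intro α p q hp hq C hC f
    rw [NE_succ n α p q hp hq, NE_succ n α p q hp hq, ← HN_const_mul _ _ _ (hp _) (hq _) C hC]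
    congr 1; funext t
    exact ih _ _ _ (fun i => hp _) (fun i => hq _) C hC _

/-- strong (iterated) maximal function. -/
def SM : (n : ℕ) → ((Fin n → ℝ) → ℝ≥0∞) → (Fin n → ℝ) → ℝ≥0∞
  | 0, f => f
  | n + 1, f => fun x => SM n (fun y => Mx (fun s => f (Fin.snoc y s)) (x (Fin.last n))) (Fin.init x)

lemma SM_arg_meas (n : ℕ) (f : (Fin (n + 1) → ℝ) → ℝ≥0∞) (hf : Measurable f) :
    Measurable (Function.uncurry fun (t : ℝ) (y : Fin n → ℝ) => f (Fin.snoc y t)) :=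
  hf.comp ((snoc_meas n).comp (measurable_snd.prodMk measurable_fst))

lemma SM_arg_meas' (n : ℕ) (f : (Fin (n + 1) → ℝ) → ℝ≥0∞) (hf : Measurable f) (t : ℝ) :
    Measurable fun y : Fin n → ℝ => Mx (fun s => f (Fin.snoc y s)) t :=
  (Mx2_meas (fun (t : ℝ) (y : Fin n → ℝ) => f (Fin.snoc y t)) (SM_arg_meas n f hf)).comp (measurable_const.prodMk measurable_id)

theorem SM_bound (n : ℕ) : ∀ (α p q : Fin n → ℝ) (_ : ∀ i, 1 < p i) (_ : ∀ i, 1 < q i)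
    (_ : ∀ i, -(1 / q i) < α i ∧ α i < 1 - 1 / q i), ∃ C : ℝ≥0∞, C ≠ ∞ ∧
      ∀ f : (Fin n → ℝ) → ℝ≥0∞, Measurable f → NE n α p q (SM n f) ≤ C * NE n α p q f := by
  induction n with
  | zero =>
    intro α p q hp hq hα
    exact ⟨1, by simp, fun f hf => by rw [one_mul]; rfl⟩
  | succ n ih =>
    intro α p q hp hq hα
    have hp' : ∀ i, 1 < (Fin.init p : Fin n → ℝ) i := fun i => hp _
    have hq' : ∀ i, 1 < (Fin.init q : Fin n → ℝ) i := fun i => hq _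
    obtain ⟨C1, hC1, H1⟩ := ih (Fin.init α) (Fin.init p) (Fin.init q) hp' hq' (fun i => hα _)
    obtain ⟨C2, hC2, H2⟩ := herz_step (α (Fin.last n)) (p (Fin.last n)) (q (Fin.last n)) (hp _) (hq _) (hα _).1 (hα _).2 _
      (Fam_WB n (Fin.init α) (Fin.init p) (Fin.init q) hp' hq' _ (hq (Fin.last n)))
    refine ⟨C1 * C2, ENNReal.mul_ne_top hC1 hC2, fun f hf => ?_⟩
    rw [NE_succ n α p q hp hq, NE_succ n α p q hp hq]
    have h1 : ∀ t : ℝ, (NE n (Fin.init α) (Fin.init p) (Fin.init q) fun y => SM (n + 1) f (Fin.snoc y t)) ≤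
        C1 * NE n (Fin.init α) (Fin.init p) (Fin.init q) fun y => Mx (fun s => f (Fin.snoc y s)) t := by
      intro t
      have e : (fun y : Fin n → ℝ => SM (n + 1) f (Fin.snoc y t)) = SM n (fun y => Mx (fun s => f (Fin.snoc y s)) t) := by
        funext y
        simp only [SM, Fin.snoc_last, Fin.init_snoc]
      rw [e]
      exact H1 _ (SM_arg_meas' n f hf t)
    refine (HN_mono _ _ _ (hp _) (hq _) h1).trans ?_
    rw [HN_const_mul _ _ _ (hp _) (hq _) C1 hC1, mul_assoc]
    refine mul_le_mul_right ?_ _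
    exact H2 _ ⟨fun t y => f (Fin.snoc y t), SM_arg_meas n f hf, rfl⟩

lemma Mx_real (h : ℝ → ℝ≥0∞) (t r : ℝ) (hr : 0 < r) :
    ∫⁻ s in Set.Ioo (t - r) (t + r), h s ≤ ENNReal.ofReal (4 * r) * Mx h t := by
  obtain ⟨a, ha1, ha2⟩ := exists_rat_btwn (show t - 2 * r < t - r by linarith)
  obtain ⟨b, hb1, hb2⟩ := exists_rat_btwn (show t + r < t + 2 * r by linarith)
  have hab : (a : ℝ) < b := by linarith
  have h1 := le_Mmu volume h t a b ⟨by linarith, by linarith⟩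
  have hv : volume (Set.Ioo (a : ℝ) b) ≤ ENNReal.ofReal (4 * r) := by
    rw [Real.volume_Ioo]; exact ENNReal.ofReal_le_ofReal (by linarith)
  calc ∫⁻ s in Set.Ioo (t - r) (t + r), h s ≤ ∫⁻ s in Set.Ioo (a : ℝ) b, h s :=
        lintegral_mono_set (Set.Ioo_subset_Ioo (by linarith) (by linarith))
    _ = volume (Set.Ioo (a : ℝ) b) * ((volume (Set.Ioo (a : ℝ) b))⁻¹ * ∫⁻ s in Set.Ioo (a : ℝ) b, h s) := by
        rw [← mul_assoc, ENNReal.mul_inv_cancel (vol_Ioo_ne_zero a b (by exact_mod_cast hab)) (vol_Ioo_ne_top _ _), one_mul]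
    _ ≤ _ := mul_le_mul' hv h1

/-- open cube. -/
def cube (n : ℕ) (x : Fin n → ℝ) (r : ℝ) : Set (Fin n → ℝ) := Set.univ.pi fun i => Set.Ioo (x i - r) (x i + r)

lemma cube_meas (n : ℕ) (x : Fin n → ℝ) (r : ℝ) : MeasurableSet (cube n x r) :=
  MeasurableSet.univ_pi fun _ => measurableSet_Ioo

lemma mem_cube_snoc (n : ℕ) (x : Fin (n + 1) → ℝ) (r : ℝ) (y : Fin n → ℝ) (t : ℝ) :
    (Fin.snoc y t : Fin (n + 1) → ℝ) ∈ cube (n + 1) x r ↔ y ∈ cube n (Fin.init x) r ∧ t ∈ Set.Ioo (x (Fin.last n) - r) (x (Fin.last n) + r) := by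
  simp only [cube, Set.mem_univ_pi]
  rw [Fin.forall_fin_succ']
  simp [Fin.init]

lemma lint_snoc (n : ℕ) (g : (Fin (n + 1) → ℝ) → ℝ≥0∞) (hg : Measurable g) :
    ∫⁻ y, g y = ∫⁻ y : Fin n → ℝ, ∫⁻ t : ℝ, g (Fin.snoc y t) := by
  have h := (volume_preserving_piFinSuccAbove (fun _ : Fin (n + 1) => ℝ) (Fin.last n)).symm
  rw [← h.lintegral_comp hg, Measure.volume_eq_prod, lintegral_prod_symm]
  · congr 1; funext y; congr 1; funext t
    congr 1
    simp [MeasurableEquiv.piFinSuccAbove, Fin.insertNthEquiv, Fin.insertNth_last']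
  · exact (hg.comp (MeasurableEquiv.measurable _)).aemeasurable

lemma cube_le (n : ℕ) : ∀ (f : (Fin n → ℝ) → ℝ≥0∞) (_ : Measurable f) (x : Fin n → ℝ) (r : ℝ) (_ : 0 < r),
    ∫⁻ y in cube n x r, f y ≤ ENNReal.ofReal (4 * r) ^ n * SM n f x := by
  induction n with
  | zero =>
    intro f hf x r hr
    have : ∫⁻ y in cube 0 x r, f y ≤ ∫⁻ y, f y := setLIntegral_le_lintegral _ _
    refine this.trans ?_
    rw [volume_pi, Measure.pi_of_empty _ x, lintegral_dirac]
    simp [SM]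
  | succ n ih =>
    intro f hf x r hr
    rw [← lintegral_indicator (cube_meas _ _ _), lint_snoc n _ (hf.indicator (cube_meas _ _ _))]
    have h1 : ∀ y : Fin n → ℝ, ∫⁻ t : ℝ, (cube (n + 1) x r).indicator f (Fin.snoc y t) ≤
        (cube n (Fin.init x) r).indicator (fun y => ENNReal.ofReal (4 * r) * Mx (fun s => f (Fin.snoc y s)) (x (Fin.last n))) y := by
      intro y
      by_cases hy : y ∈ cube n (Fin.init x) r
      · rw [Set.indicator_of_mem hy]
        refine le_trans ?_ (Mx_real (fun s => f (Fin.snoc y s)) (x (Fin.last n)) r hr)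
        rw [← lintegral_indicator measurableSet_Ioo]
        refine lintegral_mono fun t => ?_
        by_cases ht : t ∈ Set.Ioo (x (Fin.last n) - r) (x (Fin.last n) + r)
        · rw [Set.indicator_of_mem ht, Set.indicator_of_mem ((mem_cube_snoc n x r y t).2 ⟨hy, ht⟩)]
        · rw [Set.indicator_of_notMem fun hc => ht ((mem_cube_snoc n x r y t).1 hc).2]; exact zero_le
      · rw [Set.indicator_of_notMem hy]
        have : ∀ t : ℝ, (cube (n + 1) x r).indicator f (Fin.snoc y t) = 0 := fun t =>
          Set.indicator_of_notMem (fun hc => hy ((mem_cube_snoc n x r y t).1 hc).1) _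
        simp [this]
    refine (lintegral_mono h1).trans ?_
    rw [lintegral_indicator (cube_meas _ _ _), lintegral_const_mul' _ _ ENNReal.ofReal_ne_top, pow_succ, mul_comm (_ ^ n), mul_assoc]
    exact mul_le_mul_right (ih _ (SM_arg_meas' n f hf _) (Fin.init x) r hr) _

lemma eball_sub (n : ℕ) (x : Fin n → ℝ) (r : ℝ) (hr : 0 < r) : eucBall n x r ⊆ cube n x r := by
  intro y hy
  have hy' : ∑ i, (y i - x i) ^ 2 < r ^ 2 := hy
  intro i _
  have h1 : (y i - x i) ^ 2 < r ^ 2 := lt_of_le_of_lt (Finset.single_le_sum (f := fun i => (y i - x i) ^ 2) (fun j _ => sq_nonneg _) (Finset.mem_univ i)) hy'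
  have h2 := abs_lt.1 (abs_lt_of_sq_lt_sq h1 hr.le)
  exact ⟨by linarith [h2.1], by linarith [h2.2]⟩

lemma eball_sup (n : ℕ) (x : Fin n → ℝ) (r : ℝ) (hr : 0 < r) : cube n x (r / (n + 1)) ⊆ eucBall n x r := by
  intro y hy
  change ∑ i, (y i - x i) ^ 2 < r ^ 2
  have hn : (0 : ℝ) ≤ n := Nat.cast_nonneg n
  have h1 : ∀ i ∈ Finset.univ, (y i - x i) ^ 2 ≤ (r / (n + 1)) ^ 2 := by
    intro i _
    have := hy i (Set.mem_univ i)
    apply sq_le_sq'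
    · linarith [this.1]
    · linarith [this.2]
  refine (Finset.sum_le_card_nsmul _ _ _ h1).trans_lt ?_
  rw [Finset.card_univ, Fintype.card_fin, nsmul_eq_mul, div_pow, ← mul_div_assoc, div_lt_iff₀ (by positivity)]
  nlinarith [sq_pos_of_pos hr, mul_nonneg hn (sq_nonneg r), mul_nonneg (mul_nonneg hn hn) (sq_nonneg r)]

lemma centered_le (n : ℕ) (f : (Fin n → ℝ) → ℝ≥0∞) (hf : Measurable f) (x : Fin n → ℝ) :
    centeredMax n f x ≤ ENNReal.ofReal (2 * (n + 1)) ^ n * SM n f x := by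
  refine iSup₂_le fun r hr => ?_
  have hn : (0 : ℝ) < (n : ℝ) + 1 := by positivity
  set ρ := r / ((n : ℝ) + 1) with hρ
  have hρ0 : 0 < ρ := by positivity
  have hv : ENNReal.ofReal (2 * ρ) ^ n ≤ volume (eucBall n x r) := by
    refine le_trans (le_of_eq ?_) (measure_mono (eball_sup n x r hr))
    rw [cube, Real.volume_pi_Ioo]
    have : ∀ i : Fin n, x i + r / ((n : ℝ) + 1) - (x i - r / (n + 1)) = 2 * ρ := fun i => by rw [hρ]; ring
    simp [this]
  have hi := (lintegral_mono_set (μ := volume) (f := f) (eball_sub n x r hr)).trans (cube_le n f hf x r hr)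
  refine (mul_le_mul' (ENNReal.inv_le_inv.2 hv) hi).trans (le_of_eq ?_)
  have e : ENNReal.ofReal (4 * r) = ENNReal.ofReal (2 * ρ) * ENNReal.ofReal (2 * (n + 1)) := by
    rw [← ENNReal.ofReal_mul (by positivity), hρ]; congr 1; field_simp; ring
  rw [e, mul_pow, ← mul_assoc, ← mul_assoc, ENNReal.inv_mul_cancel, one_mul]
  · exact pow_ne_zero _ (by simpa using hρ0)
  · exact ENNReal.pow_ne_top ENNReal.ofReal_ne_top

/-- boundedness of the centered Hardy–Littlewood maximal operator. -/
theorem mixedHerz_HL_bounded (n : ℕ) (p q α : Fin n → ℝ)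
    (hp : ∀ i, 1 < p i) (hq : ∀ i, 1 < q i)
    (hα : ∀ i, -(1 / q i) < α i ∧ α i < 1 - 1 / q i) :
    ∃ C : ℝ≥0∞, 0 < C ∧ C ≠ ∞ ∧ ∀ f : (Fin n → ℝ) → ℂ, Measurable f →
      mixedHerzNormE n α (fun i => ENNReal.ofReal (p i)) (fun i => ENNReal.ofReal (q i))
          (centeredMax n fun y => (‖f y‖₊ : ℝ≥0∞)) ≤
        C * herzNormC n α (fun i => ENNReal.ofReal (p i)) (fun i => ENNReal.ofReal (q i)) f := by
  obtain ⟨C, hC, H⟩ := SM_bound n α p q hp hq hα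
  have hDt : ENNReal.ofReal (2 * ((n : ℝ) + 1)) ^ n ≠ ∞ := ENNReal.pow_ne_top ENNReal.ofReal_ne_top
  refine ⟨max 1 (ENNReal.ofReal (2 * ((n : ℝ) + 1)) ^ n * C), lt_max_of_lt_left (by norm_num), ?_, ?_⟩
  · have := ENNReal.mul_ne_top hDt hC
    rcases max_choice 1 (ENNReal.ofReal (2 * ((n : ℝ) + 1)) ^ n * C) with h | h <;> rw [h]
    · exact ENNReal.one_ne_top
    · exact this
  intro f hf
  set g : (Fin n → ℝ) → ℝ≥0∞ := fun y => (‖f y‖₊ : ℝ≥0∞) with hg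
  have hgm : Measurable g := hf.nnnorm.coe_nnreal_ennreal
  change NE n α p q (centeredMax n g) ≤ _ * NE n α p q g
  refine (NE_mono n α p q hp hq _ _ (centered_le n g hgm)).trans ?_
  rw [NE_const_mul n α p q hp hq _ hDt]
  refine le_trans ?_ (mul_le_mul_left (le_max_right _ _) _)
  rw [mul_assoc]
  exact mul_le_mul_right (H g hgm) _
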